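/- arXiv:1111.4047 — 2 statements merged into one kernel-verified Lean document; each statement's English description precedes it below -/
import Mathlib

section
/- (Derangement MMT) For an n×n matrix A, Σ_r (1/r!) dperm_β A(n^r,n^r) = e^{-β Tr A} / det(I-A)^β, where the sum is over all n-tuples r of non-negative integers. -/
open scoped Classical

noncomputable section

/-- Number of cycles of a permutation, counting fixed points as 1-cycles. -/
def cycleCount {α : Type*} [Fintype α] [DecidableEq α] (π : Equiv.Perm α) : ℕ :=
  (Finset.univ.filter fun x => π x = x).card + π.cycleType.card

/-- The β-extended deranged permanent: the sum runs over the fixed-point free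
permutations only. -/
def dpermB {α : Type*} [Fintype α] [DecidableEq α] {R : Type*} [CommRing R]
    (β : R) (M : Matrix α α R) : R :=
  ∑ π ∈ Finset.univ.filter (fun π : Equiv.Perm α => ∀ x, π x ≠ x),
    β ^ cycleCount π * ∏ i, M i (π i)

/-- `A(n^r, n^r)`: index `i` repeated `r i` times. -/
def repA {n : ℕ} {R : Type*} (A : Matrix (Fin n) (Fin n) R) (r : Fin n → ℕ) :
    Matrix ((i : Fin n) × Fin (r i)) ((i : Fin n) × Fin (r i)) R :=
  fun k l => A k.1 l.1

/-!
There are `N! / r!` words of length `N` with content `r`, so the sum of the terms with `∑ r i = N`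
is `1 / N!` times the sum of the deranged permanents of `A.submatrix f f` over all words `f` of
length `N`. Exchanging sums, a fixed derangement collects over all words one closed walk per cycle,
hence the product of `β * tr (A ^ k)` over its cycle lengths `k`. By the exponential formula this is
the coefficient of `X ^ N` in `exp (∑_{k ≥ 2} β tr (A ^ k) X ^ k / k)`, while Jacobi's formula for
the derivative of a determinant gives `det (1 - X A) = exp (-∑_{k ≥ 1} tr (A ^ k) X ^ k / k)`.

If `‖A‖ < 1`, both series converge absolutely at `X = 1`. The sum over `r` converges absolutely
because it is dominated termwise by the same sum for `|β|` and the matrix of the `|A i j|`, which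
has the same norm as `A`.
-/

open Equiv Equiv.Perm PowerSeries Finset.HasAntidiagonal

theorem cycleType_permCongr {α γ : Type*} [Fintype α] [DecidableEq α] [Fintype γ] [DecidableEq γ]
    (e : α ≃ γ) (σ : Perm α) : (e.permCongr σ).cycleType = σ.cycleType := by
  rw [← cycleType_extendDomain (p := fun _ : γ => True) (e.trans (Equiv.Set.univ γ).symm)]
  congr 1

section LabelSum

variable {ι α γ R : Type*} [Fintype ι] [Fintype α] [DecidableEq α] [Fintype γ] [DecidableEq γ]
  [CommSemiring R]

/-- The total weight of a permutation `σ` over all labelings of its points by indices of `A`, where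
the weight of a labeled permutation is its term in the permanent. -/
def labelSum (A : Matrix ι ι R) (σ : Perm α) : R :=
  ∑ f : α → ι, ∏ y, A (f y) (f (σ y))

theorem labelSum_permCongr (A : Matrix ι ι R) (e : α ≃ γ) (σ : Perm α) :
    labelSum A (e.permCongr σ) = labelSum A σ := by
  refine (Fintype.sum_equiv (e.arrowCongr (.refl ι)) _ _ fun f => ?_).symm
  exact Fintype.prod_equiv e _ _ fun y => by simp

theorem labelSum_eq_of_cycleType_eq (A : Matrix ι ι R) {σ : Perm α} {τ : Perm γ}
    (hcard : Fintype.card α = Fintype.card γ) (h : σ.cycleType = τ.cycleType) :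
    labelSum A σ = labelSum A τ := by
  let e : α ≃ γ := Fintype.equivOfCardEq hcard
  obtain ⟨g, hg⟩ := isConj_iff.1
    (isConj_iff_cycleType_eq.2 ((cycleType_permCongr e σ).trans h))
  rw [← labelSum_permCongr A e, ← labelSum_permCongr A g, ← hg]
  rfl

theorem labelSum_sigmaCongrRight {κ : Type*} [Fintype κ] [DecidableEq κ] {β : κ → Type*}
    [∀ c, Fintype (β c)] [∀ c, DecidableEq (β c)] (A : Matrix ι ι R) (τ : ∀ c, Perm (β c)) :
    labelSum A (Perm.sigmaCongrRight τ) = ∏ c, labelSum A (τ c) := by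
  simp only [labelSum, Fintype.prod_sum]
  refine Fintype.sum_equiv (Equiv.piCurry fun c (_ : β c) => ι) _ _ fun f => ?_
  exact Fintype.prod_sigma _

variable [DecidableEq ι]

theorem sum_prod_path_mul (A : Matrix ι ι R) (k : ℕ) (g : ι → ι → R) :
    ∑ p : Fin (k + 1) → ι, (∏ i : Fin k, A (p i.castSucc) (p i.succ)) * g (p 0) (p (Fin.last k)) =
      ∑ i, ∑ j, (A ^ k) i j * g i j := by
  induction k generalizing g with
  | zero =>
    rw [← (Equiv.funUnique (Fin 1) ι).symm.sum_comp]
    simp [Matrix.one_apply]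
  | succ k ih =>
    rw [← (Fin.consEquiv fun _ : Fin (k + 2) => ι).sum_comp, Fintype.sum_prod_type]
    refine Finset.sum_congr rfl fun x _ => ?_
    calc _ = ∑ p : Fin (k + 1) → ι, (∏ i : Fin k, A (p i.castSucc) (p i.succ)) *
            (A x (p 0) * g x (p (Fin.last k))) :=
          Finset.sum_congr rfl fun p _ => by
            simp only [Fin.consEquiv, Equiv.coe_fn_mk, Fin.prod_univ_succ, Fin.castSucc_zero,
              Fin.cons_zero, Fin.cons_succ, ← Fin.succ_castSucc, ← Fin.succ_last]
            ring
      _ = ∑ i, ∑ j, (A ^ k) i j * (A x i * g x j) := ih fun i j => A x i * g x j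
      _ = ∑ j, (A ^ (k + 1)) x j * g x j := by
          rw [Finset.sum_comm]
          refine Finset.sum_congr rfl fun j _ => ?_
          rw [pow_succ', Matrix.mul_apply, Finset.sum_mul]
          exact Finset.sum_congr rfl fun i _ => by ring

theorem labelSum_finRotate (A : Matrix ι ι R) (k : ℕ) :
    labelSum A (finRotate (k + 1)) = (A ^ (k + 1)).trace := by
  have hpath := sum_prod_path_mul A k fun i j => A j i
  simp only [labelSum, finRotate_apply, Fin.prod_univ_castSucc, Fin.last_add_one,
    Fin.coeSucc_eq_succ]
  rw [hpath, pow_succ]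
  simp only [Matrix.trace, Matrix.diag, Matrix.mul_apply]

theorem labelSum_of_isCycle (A : Matrix ι ι R) {σ : Perm α} (hσ : σ.IsCycle)
    (hsupp : σ.support = Finset.univ) : labelSum A σ = (A ^ Fintype.card α).trace := by
  have htwo := hσ.two_le_card_support
  rw [hsupp, Finset.card_univ] at htwo
  obtain ⟨k, hk⟩ := Nat.exists_eq_add_of_le' htwo
  rw [hk, ← labelSum_finRotate]
  refine labelSum_eq_of_cycleType_eq A (by simpa using hk) ?_
  rw [hσ.cycleType, hsupp, Finset.card_univ, hk, cycleType_finRotate]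

theorem labelSum_subtypePerm_support (A : Matrix ι ι R) {c : Perm α} (hc : c.IsCycle) :
    labelSum A (c.subtypePerm (p := (· ∈ c.support)) fun _ => apply_mem_support) =
      (A ^ c.support.card).trace := by
  have hofSubtype : ofSubtype (c.subtypePerm (p := (· ∈ c.support)) fun _ => apply_mem_support) =
      c := ofSubtype_subtypePerm _ fun _ => mem_support.2
  have hcycle : (c.subtypePerm (p := (· ∈ c.support)) fun _ => apply_mem_support).IsCycle := by
    rw [← card_cycleType_eq_one, ← cycleType_ofSubtype, hofSubtype, card_cycleType_eq_one]
    exact hc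
  rw [labelSum_of_isCycle A hcycle, Fintype.card_coe]
  ext x
  simpa [Subtype.ext_iff] using mem_support.1 x.2

/-- The decomposition of the points of a derangement into the supports of its cycles. -/
def cycleSupportEquiv (π : Perm α) (hπ : π ∈ derangements α) :
    α ≃ Σ c : π.cycleFactorsFinset, (c : Perm α).support where
  toFun x := ⟨⟨π.cycleOf x, cycleOf_mem_cycleFactorsFinset_iff.2 (mem_support.2 (hπ x))⟩,
    ⟨x, mem_support_cycleOf_iff.2 ⟨.refl _ _, mem_support.2 (hπ x)⟩⟩⟩
  invFun p := p.2
  left_inv _ := rfl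
  right_inv := by
    rintro ⟨⟨c, hc⟩, ⟨x, hx⟩⟩
    obtain rfl : c = π.cycleOf x := (eq_cycleOf_of_mem_cycleFactorsFinset_iff _ c hc x).2 hx
    rfl

theorem cycleSupportEquiv_permCongr (π : Perm α) (hπ : π ∈ derangements α) :
    (cycleSupportEquiv π hπ).permCongr π = Perm.sigmaCongrRight fun c : π.cycleFactorsFinset =>
      (c : Perm α).subtypePerm (p := (· ∈ (c : Perm α).support)) fun _ => apply_mem_support := by
  ext1 ⟨c, y⟩
  rw [Equiv.permCongr_apply, ← Equiv.eq_symm_apply]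
  exact ((mem_cycleFactorsFinset_iff.1 c.2).2 y y.2).symm

theorem labelSum_of_mem_derangements (A : Matrix ι ι R) {π : Perm α} (hπ : π ∈ derangements α) :
    labelSum A π = (π.cycleType.map fun k => (A ^ k).trace).prod := by
  rw [← labelSum_permCongr A (cycleSupportEquiv π hπ), cycleSupportEquiv_permCongr,
    labelSum_sigmaCongrRight, cycleType_def, Multiset.map_map, ← Finset.prod_eq_multiset_prod,
    ← Finset.prod_coe_sort π.cycleFactorsFinset]
  exact Finset.prod_congr rfl fun c _ =>
    labelSum_subtypePerm_support A (mem_cycleFactorsFinset_iff.1 c.2).1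

end LabelSum

section Content

variable {ι : Type*} [DecidableEq ι]

/-- The content of a word `f`: how often each letter occurs in it. -/
def content {α : Type*} [Fintype α] (f : α → ι) (i : ι) : ℕ :=
  Fintype.card {x // f x = i}

theorem exists_equiv_sigma_content {α : Type*} [Fintype α] (f : α → ι) :
    ∃ e : α ≃ Σ i, Fin (content f i), ∀ x, (e x).1 = f x :=
  ⟨(Equiv.sigmaFiberEquiv f).symm.trans
    (Equiv.sigmaCongrRight fun _ => Fintype.equivFin _), fun _ => rfl⟩

variable [Fintype ι]

theorem sum_content {α : Type*} [Fintype α] (f : α → ι) : ∑ i, content f i = Fintype.card α := by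
  simp only [content, ← Fintype.card_sigma, Fintype.card_congr (Equiv.sigmaFiberEquiv f)]

theorem prod_comp_eq_prod_pow_content {α M : Type*} [Fintype α] [CommMonoid M] (f : α → ι)
    (x : ι → M) : ∏ a, x (f a) = ∏ i, x i ^ content f i := by
  rw [← Finset.prod_fiberwise' Finset.univ f x]
  simp only [Finset.prod_const, content, Fintype.card_subtype]

theorem card_content_eq_multinomial (r : ι → ℕ) {N : ℕ} (hr : ∑ i, r i = N) :
    (Finset.univ.filter fun f : Fin N → ι => content f = r).card =
      Nat.multinomial Finset.univ r := by
  let d : ι →₀ ℕ := Finsupp.equivFunOnFinite.symm r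
  have hd : (d.sum fun _ m => m) = N := by simp [d, Finsupp.sum_fintype, hr]
  have hcoeff := MvPolynomial.coeff_sum_X_pow_of_fintype (R := ℕ) d N
  rw [if_pos hd, Finsupp.multinomial_eq_of_support_subset (Finset.subset_univ _),
    Fintype.sum_pow, MvPolynomial.coeff_sum] at hcoeff
  refine Eq.trans ?_ hcoeff
  rw [Finset.card_filter]
  refine Finset.sum_congr rfl fun f _ => ?_
  rw [prod_comp_eq_prod_pow_content, MvPolynomial.coeff_prod_X_pow]
  simp [d, DFunLike.ext_iff, funext_iff, eq_comm]

theorem sum_comp_content {R : Type*} [CommSemiring R] (N : ℕ) (h : (ι → ℕ) → R) :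
    ∑ f : Fin N → ι, h (content f) =
      ∑ r ∈ Finset.univ.piAntidiag N, (Nat.multinomial Finset.univ r : R) * h r := by
  rw [← Finset.sum_fiberwise_of_maps_to' (t := Finset.univ.piAntidiag N) (g := content)
    fun f _ => by simp [sum_content]]
  refine Finset.sum_congr rfl fun r hr => ?_
  rw [Finset.sum_const, nsmul_eq_mul,
    ← card_content_eq_multinomial r (Finset.mem_piAntidiag.1 hr).1]

end Content

section DerangedPermanent

variable {R : Type*} [CommRing R]

theorem cycleCount_of_mem_derangements {α : Type*} [Fintype α] [DecidableEq α] {π : Perm α}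
    (hπ : π ∈ derangements α) : cycleCount π = π.cycleType.card := by
  simp [cycleCount, Finset.filter_false_of_mem fun x _ => hπ x]

theorem dpermB_eq_sum_derangements {α : Type*} [Fintype α] [DecidableEq α] (β : R)
    (M : Matrix α α R) :
    dpermB β M = ∑ π : derangements α, β ^ (π : Perm α).cycleType.card * ∏ i, M i (π.1 i) := by
  rw [dpermB, Finset.sum_subtype (p := (· ∈ derangements α)) _ fun π => by simp [derangements]]
  exact Finset.sum_congr rfl fun π _ => by rw [cycleCount_of_mem_derangements π.2]

theorem dpermB_submatrix_equiv {α γ : Type*} [Fintype α] [DecidableEq α] [Fintype γ]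
    [DecidableEq γ] (e : α ≃ γ) (β : R) (M : Matrix γ γ R) :
    dpermB β (M.submatrix e e) = dpermB β M := by
  simp only [dpermB_eq_sum_derangements]
  refine Fintype.sum_equiv e.derangementsCongr _ _ fun π => ?_
  have hcoe : (e.derangementsCongr π : Perm γ) = e.permCongr π := rfl
  rw [hcoe, cycleType_permCongr, ← e.prod_comp]
  simp only [Matrix.submatrix_apply, Equiv.permCongr_apply, Equiv.symm_apply_apply]

theorem dpermB_repA_content {n : ℕ} {α : Type*} [Fintype α] [DecidableEq α] (β : R)
    (A : Matrix (Fin n) (Fin n) R) (f : α → Fin n) :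
    dpermB β (repA A (content f)) = dpermB β (A.submatrix f f) := by
  obtain ⟨e, he⟩ := exists_equiv_sigma_content f
  rw [← dpermB_submatrix_equiv e]
  congr 1
  ext k l
  simp only [Matrix.submatrix_apply, repA, he]

theorem sum_dpermB_submatrix {ι α : Type*} [Fintype ι] [DecidableEq ι] [Fintype α] [DecidableEq α]
    (β : R) (A : Matrix ι ι R) :
    ∑ f : α → ι, dpermB β (A.submatrix f f) =
      ∑ π : derangements α, ((π : Perm α).cycleType.map fun k => β * (A ^ k).trace).prod := by
  simp only [dpermB_eq_sum_derangements]
  rw [Finset.sum_comm]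
  refine Finset.sum_congr rfl fun π _ => ?_
  rw [Multiset.prod_map_mul, ← labelSum_of_mem_derangements A π.2, labelSum, Finset.mul_sum,
    Multiset.map_const', Multiset.prod_replicate]
  rfl

end DerangedPermanent

theorem sum_piAntidiag_dpermB_repA {K : Type*} [Field K] [CharZero K] {n : ℕ} (β : K)
    (A : Matrix (Fin n) (Fin n) K) (N : ℕ) :
    ∑ r ∈ Finset.univ.piAntidiag N, ((∏ i, (r i).factorial : ℕ) : K)⁻¹ * dpermB β (repA A r) =
      (N.factorial : K)⁻¹ * ∑ π : derangements (Fin N),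
        ((π : Perm (Fin N)).cycleType.map fun k => β * (A ^ k).trace).prod := by
  rw [← sum_dpermB_submatrix β A]
  simp only [← dpermB_repA_content]
  rw [sum_comp_content N fun r => dpermB β (repA A r), Finset.mul_sum]
  refine Finset.sum_congr rfl fun r hr => ?_
  have hspec := Nat.multinomial_spec Finset.univ r
  rw [(Finset.mem_piAntidiag.1 hr).1] at hspec
  have hprod : ((∏ i, (r i).factorial : ℕ) : K) ≠ 0 :=
    Nat.cast_ne_zero.2 (Finset.prod_ne_zero_iff.2 fun i _ => (r i).factorial_ne_zero)
  have hmult : (Nat.multinomial Finset.univ r : K) ≠ 0 :=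
    Nat.cast_ne_zero.2 (Nat.multinomial_pos _ _).ne'
  rw [← hspec, Nat.cast_mul]
  field_simp

section ExponentialFormula

/-- The multisets of positive integers with sum `N`, that is, the partitions of `N`; multisets
rather than `Nat.Partition` because parts get removed one at a time. -/
def partitionMultisets (N : ℕ) : Finset (Multiset ℕ) :=
  (Finset.univ : Finset N.Partition).image Nat.Partition.parts

theorem mem_partitionMultisets {N : ℕ} {m : Multiset ℕ} :
    m ∈ partitionMultisets N ↔ (∀ k ∈ m, 0 < k) ∧ m.sum = N := by
  simp only [partitionMultisets, Finset.mem_image, Finset.mem_univ, true_and]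
  exact ⟨fun ⟨p, hp⟩ => hp ▸ ⟨fun _ => p.parts_pos, p.parts_sum⟩,
    fun ⟨hpos, hsum⟩ => ⟨⟨m, hpos _, hsum⟩, rfl⟩⟩

variable {K : Type*} [Field K]

/-- The term `∏ x k ^ jₖ / jₖ!` that the multiset in which each `k` occurs `jₖ` times contributes to
the expansion of `exp (∑ x k)`. -/
def expWeight (x : ℕ → K) (m : Multiset ℕ) : K :=
  m.toFinsupp.prod fun k j => x k ^ j / j.factorial

variable [CharZero K]

theorem count_mul_expWeight (x : ℕ → K) {m : Multiset ℕ} {k : ℕ} (hk : k ∈ m) :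
    m.count k * expWeight x m = x k * expWeight x (m.erase k) := by
  obtain ⟨m, rfl⟩ := Multiset.exists_cons_of_mem hk
  have herase : (k ::ₘ m).toFinsupp.erase k = m.toFinsupp.erase k := by
    ext j
    by_cases hj : j = k <;> simp [hj]
  simp only [expWeight, Multiset.erase_cons_head]
  rw [← Finsupp.mul_prod_erase' _ k _ (by simp),
    ← Finsupp.mul_prod_erase' m.toFinsupp k _ (by simp),
    herase]
  simp only [Multiset.toFinsupp_apply, Multiset.count_cons_self, Nat.factorial_succ, pow_succ]
  have := Nat.cast_ne_zero (R := K).2 (m.count k).factorial_ne_zero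
  have := Nat.cast_add_one_ne_zero (R := K) (m.count k)
  push_cast
  field_simp

theorem sum_mul_expWeight (x : ℕ → K) (m : Multiset ℕ) :
    (m.sum : K) * expWeight x m = ∑ k ∈ m.toFinset, expWeight x (m.erase k) * (x k * k) := by
  rw [Finset.sum_multiset_count, Nat.cast_sum, Finset.sum_mul]
  refine Finset.sum_congr rfl fun k hk => ?_
  rw [smul_eq_mul, Nat.cast_mul]
  linear_combination (k : K) * count_mul_expWeight x (Multiset.mem_toFinset.1 hk)

theorem sum_partitionMultisets_succ {M : Type*} [AddCommMonoid M] (h : Multiset ℕ → ℕ → M)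
    (N : ℕ) :
    ∑ m ∈ partitionMultisets (N + 1), ∑ k ∈ m.toFinset, h (m.erase k) k =
      ∑ p ∈ antidiagonal N, ∑ m ∈ partitionMultisets p.1, h m (p.2 + 1) := by
  rw [Finset.sum_sigma', Finset.sum_sigma']
  refine Finset.sum_bij' (fun x _ => ⟨(N - (x.2 - 1), x.2 - 1), x.1.erase x.2⟩)
    (fun y _ => ⟨(y.1.2 + 1) ::ₘ y.2, y.1.2 + 1⟩) ?_ ?_ ?_ ?_ ?_
  · rintro ⟨m, k⟩ h
    simp only [Finset.mem_sigma, mem_partitionMultisets, Multiset.mem_toFinset,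
      mem_antidiagonal] at h ⊢
    obtain ⟨⟨hpos, hsum⟩, hk⟩ := h
    have := hpos k hk
    have := Multiset.sum_erase hk
    exact ⟨by omega, fun j hj => hpos j (Multiset.mem_of_mem_erase hj), by omega⟩
  · rintro ⟨⟨i, j⟩, m⟩ h
    simp only [Finset.mem_sigma, mem_partitionMultisets, Multiset.mem_toFinset,
      mem_antidiagonal] at h ⊢
    obtain ⟨hij, hpos, hsum⟩ := h
    refine ⟨⟨fun a ha => ?_, by rw [Multiset.sum_cons]; omega⟩, Multiset.mem_cons_self _ _⟩
    rcases Multiset.mem_cons.1 ha with rfl | ha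
    exacts [Nat.succ_pos j, hpos a ha]
  · rintro ⟨m, k⟩ h
    simp only [Finset.mem_sigma, mem_partitionMultisets, Multiset.mem_toFinset] at h
    obtain ⟨⟨hpos, -⟩, hk⟩ := h
    simp only [Nat.sub_add_cancel (hpos k hk), Multiset.cons_erase hk]
  · rintro ⟨⟨i, j⟩, m⟩ h
    simp only [Finset.mem_sigma, mem_antidiagonal] at h
    obtain rfl : N - j = i := by omega
    simp
  · rintro ⟨m, k⟩ h
    simp only [Finset.mem_sigma, mem_partitionMultisets, Multiset.mem_toFinset] at h
    simp only [Nat.sub_add_cancel (h.1.1 k h.2)]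

theorem derivative_exp_subst {F : K⟦X⟧} (hF : constantCoeff F = 0) :
    d⁄dX K ((exp K).subst F) = (exp K).subst F * d⁄dX K F := by
  rw [derivative_subst (HasSubst.of_constantCoeff_zero' hF), derivative_exp]

theorem constantCoeff_exp_subst {F : K⟦X⟧} (hF : constantCoeff F = 0) :
    constantCoeff ((exp K).subst F) = 1 := by
  have hpow : ∀ d : ℕ, d ≠ 0 → coeff d (exp K) • constantCoeff (F ^ d) = 0 := fun d hd => by
    rw [map_pow, hF, zero_pow hd, smul_zero]
  exact (constantCoeff_subst (HasSubst.of_constantCoeff_zero' hF) _).trans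
    ((finsum_eq_single _ 0 hpow).trans (by simp))

theorem eq_exp_subst_of_derivative_eq {f F : K⟦X⟧} (hF : constantCoeff F = 0)
    (hf : constantCoeff f = 1) (hderiv : d⁄dX K f = f * d⁄dX K F) : f = (exp K).subst F := by
  set E := (exp K).subst F
  have hE₀ : constantCoeff E = 1 := constantCoeff_exp_subst hF
  have hinv : E * E⁻¹ = 1 := PowerSeries.mul_inv_cancel E (by simp [hE₀])
  have hquot : f * E⁻¹ = 1 := by
    refine derivative.ext ?_ (by simp [hf, hE₀])
    rw [Derivation.leibniz, derivative_inv', hderiv, derivative_exp_subst hF,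
      Derivation.map_one_eq_zero]
    simp only [smul_eq_mul]
    linear_combination (-f * E⁻¹ * d⁄dX K F) * hinv
  calc f = f * E⁻¹ * E := by rw [mul_assoc, mul_comm E⁻¹, hinv, mul_one]
    _ = E := by rw [hquot, one_mul]

theorem mk_sum_expWeight (x : ℕ → K) (hx : x 0 = 0) :
    mk (fun N => ∑ m ∈ partitionMultisets N, expWeight x m) = (exp K).subst (mk x) := by
  refine eq_exp_subst_of_derivative_eq (by simp [hx]) ?_ ?_
  · rw [← coeff_zero_eq_constantCoeff_apply, coeff_mk]
    simp [partitionMultisets, expWeight]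
  · ext N
    rw [coeff_derivative, coeff_mul, coeff_mk, ← Nat.cast_succ, Finset.sum_mul]
    simp only [coeff_mk, coeff_derivative, Finset.sum_mul, ← Nat.cast_succ]
    rw [← sum_partitionMultisets_succ fun m k => expWeight x m * (x k * k)]
    refine Finset.sum_congr rfl fun m hm => ?_
    rw [← sum_mul_expWeight, (mem_partitionMultisets.1 hm).2, mul_comm]

end ExponentialFormula

section CycleIndex

theorem sum_cycleType_of_mem_derangements {α : Type*} [Fintype α] [DecidableEq α] {π : Perm α}
    (hπ : π ∈ derangements α) : π.cycleType.sum = Fintype.card α := by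
  rw [sum_cycleType, ← Finset.card_univ]
  congr 1
  ext x
  simpa using hπ x

theorem mem_derangements_of_sum_cycleType {α : Type*} [Fintype α] [DecidableEq α] {π : Perm α}
    (hπ : π.cycleType.sum = Fintype.card α) : π ∈ derangements α := fun x => by
  rw [sum_cycleType, ← Finset.card_univ] at hπ
  rw [← mem_support, Finset.eq_of_subset_of_card_le (Finset.subset_univ _) hπ.ge]
  exact Finset.mem_univ x

theorem card_derangements_cycleType_mul {α : Type*} [Fintype α] [DecidableEq α] {m : Multiset ℕ}
    (hsum : m.sum = Fintype.card α) (htwo : ∀ k ∈ m, 2 ≤ k) :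
    (Finset.univ.filter fun π : derangements α => (π : Perm α).cycleType = m).card *
      (m.prod * ∏ k ∈ m.toFinset, (m.count k).factorial) = (Fintype.card α).factorial := by
  have hcard := card_of_cycleType_mul_eq α m
  rw [if_pos ⟨hsum.le, htwo⟩, hsum, Nat.sub_self, Nat.factorial_zero, one_mul] at hcard
  rw [← hcard]
  congr 1
  refine Finset.card_bij (fun π _ => π.1) (by simp) (fun _ _ _ _ => Subtype.ext) fun π hπ => ?_
  have hπm : π.cycleType = m := (Finset.mem_filter.1 hπ).2
  exact ⟨⟨π, mem_derangements_of_sum_cycleType (hπm ▸ hsum)⟩, by simpa using hπm, rfl⟩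

variable {K : Type*} [Field K]

/-- The power series `∑_{k ≥ 2} s k / k * X ^ k`, whose exponential is the generating function of
derangements weighted by their cycle lengths. -/
def derangementLog (s : ℕ → K) : K⟦X⟧ :=
  mk fun k => if k ≤ 1 then 0 else s k / k

theorem constantCoeff_derangementLog (s : ℕ → K) : constantCoeff (derangementLog s) = 0 := by
  simp [derangementLog]

variable [CharZero K]

theorem prod_mul_expWeight (x : ℕ → K) (m : Multiset ℕ) :
    ((m.prod * ∏ k ∈ m.toFinset, (m.count k).factorial : ℕ) : K) * expWeight x m =
      (m.map fun k => k * x k).prod := by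
  rw [Finset.prod_multiset_map_count, Finset.prod_multiset_count, ← Finset.prod_mul_distrib,
    Nat.cast_prod, expWeight, Finsupp.prod, Multiset.toFinsupp_support, ← Finset.prod_mul_distrib]
  refine Finset.prod_congr rfl fun k _ => ?_
  have := Nat.cast_ne_zero (R := K).2 (m.count k).factorial_ne_zero
  rw [Multiset.toFinsupp_apply]
  push_cast
  field_simp
  exact (mul_pow _ _ _).symm

theorem sum_filter_cycleType (s : ℕ → K) {N : ℕ} {m : Multiset ℕ}
    (hm : m ∈ partitionMultisets N) :
    ∑ π ∈ Finset.univ.filter fun π : derangements (Fin N) => (π : Perm (Fin N)).cycleType = m,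
        ((π : Perm (Fin N)).cycleType.map s).prod =
      N.factorial * expWeight (fun k => if k ≤ 1 then 0 else s k / k) m := by
  obtain ⟨hpos, hsum⟩ := mem_partitionMultisets.1 hm
  by_cases hone : 1 ∈ m
  · have hempty : Finset.univ.filter
        (fun π : derangements (Fin N) => (π : Perm (Fin N)).cycleType = m) = ∅ :=
      Finset.filter_eq_empty_iff.2 fun π _ hπ =>
        (one_lt_of_mem_cycleType (hπ ▸ hone)).false
    have hweight := count_mul_expWeight (fun k => if k ≤ 1 then 0 else s k / k) hone
    rw [if_pos le_rfl, zero_mul, mul_eq_zero, Nat.cast_eq_zero, Multiset.count_eq_zero] at hweight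
    rw [hempty, Finset.sum_empty, hweight.resolve_left (not_not.2 hone), mul_zero]
  · have htwo : ∀ k ∈ m, 2 ≤ k := fun k hk =>
      Nat.lt_of_le_of_ne (hpos k hk) fun h => hone (h ▸ hk)
    have hmap : (m.map fun k : ℕ => (k : K) * if k ≤ 1 then 0 else s k / k) = m.map s :=
      Multiset.map_congr rfl fun k hk => by
        have := htwo k hk
        rw [if_neg (by omega), mul_div_cancel₀ _ (Nat.cast_ne_zero.2 (by omega))]
    rw [Finset.sum_congr rfl fun π hπ => by rw [(Finset.mem_filter.1 hπ).2], Finset.sum_const,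
      nsmul_eq_mul, ← hmap, ← prod_mul_expWeight, ← mul_assoc, ← Nat.cast_mul,
      card_derangements_cycleType_mul (α := Fin N)
        (hsum.trans (Fintype.card_fin N).symm) htwo, Fintype.card_fin]

theorem coeff_exp_subst_derangementLog (s : ℕ → K) (N : ℕ) :
    coeff N ((exp K).subst (derangementLog s)) = (N.factorial : K)⁻¹ *
      ∑ π : derangements (Fin N), ((π : Perm (Fin N)).cycleType.map s).prod := by
  have hmaps : ∀ π : derangements (Fin N), (π : Perm (Fin N)).cycleType ∈ partitionMultisets N :=
    fun π => mem_partitionMultisets.2 ⟨fun _ hk => (one_lt_of_mem_cycleType hk).pos,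
      (sum_cycleType_of_mem_derangements π.2).trans (Fintype.card_fin N)⟩
  rw [derangementLog, ← mk_sum_expWeight (fun k => if k ≤ 1 then 0 else s k / k)
    (if_pos zero_le_one), coeff_mk, ← Finset.sum_fiberwise_of_maps_to fun π _ => hmaps π,
    Finset.sum_congr rfl fun m hm => sum_filter_cycleType s hm, ← Finset.mul_sum]
  exact (inv_mul_cancel_left₀ (Nat.cast_ne_zero.2 N.factorial_ne_zero) _).symm

end CycleIndex

section Determinant

variable {ι : Type*} [Fintype ι] [DecidableEq ι]

theorem derivation_prod {R S κ : Type*} [CommSemiring R] [CommSemiring S] [Algebra R S]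
    [DecidableEq κ] (D : Derivation R S S) (s : Finset κ) (f : κ → S) :
    D (∏ i ∈ s, f i) = ∑ i ∈ s, (∏ j ∈ s.erase i, f j) * D (f i) := by
  induction s using Finset.induction_on with
  | empty => simp
  | insert a s ha ih =>
    rw [Finset.prod_insert ha, D.leibniz, ih, Finset.sum_insert ha, Finset.erase_insert ha,
      add_comm, smul_eq_mul, smul_eq_mul, Finset.mul_sum]
    refine congrArg _ (Finset.sum_congr rfl fun i hi => ?_)
    have hai : a ≠ i := fun h => ha (h ▸ hi)
    rw [Finset.erase_insert_of_ne hai, Finset.prod_insert (fun h => ha (Finset.mem_of_mem_erase h)),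
      mul_assoc]

theorem derivation_det {R S : Type*} [CommRing R] [CommRing S] [Algebra R S]
    (D : Derivation R S S) (M : Matrix ι ι S) :
    D M.det = (M.adjugate * M.map D).trace := by
  have hrow : ∀ i, (M.adjugate * M.map D).diag i =
      ∑ σ : Perm ι, σ.sign • ((∏ j ∈ Finset.univ.erase i, M (σ j) j) * D (M (σ i) i)) :=
    fun i => calc
      _ = (M.updateCol i fun j => D (M j i)).det := by
        rw [← Matrix.cramer_apply, Matrix.cramer_eq_adjugate_mulVec]; rfl
      _ = _ := by
        rw [Matrix.det_apply]
        refine Finset.sum_congr rfl fun σ _ => congrArg _ ?_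
        rw [← Finset.prod_erase_mul _ _ (Finset.mem_univ i), Matrix.updateCol_self]
        refine congrArg (· * _) (Finset.prod_congr rfl fun j hj => ?_)
        rw [Matrix.updateCol_ne (Finset.ne_of_mem_erase hj)]
  rw [Matrix.trace, Matrix.det_apply, map_sum, Finset.sum_congr rfl fun i _ => hrow i,
    Finset.sum_comm]
  refine Finset.sum_congr rfl fun σ _ => ?_
  rw [← Finset.smul_sum, ← derivation_prod, Units.smul_def, Units.smul_def, map_zsmul]

theorem one_sub_X_smul_mul_mk_pow {R : Type*} [CommRing R] (A : Matrix ι ι R) :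
    (1 - (X : R⟦X⟧) • A.map C) * Matrix.of (fun i j => mk fun k => (A ^ k) i j) = 1 := by
  ext i j k
  rw [sub_mul, one_mul, smul_mul_assoc]
  cases k with
  | zero => obtain rfl | hij := eq_or_ne i j <;> simp [*]
  | succ k => simp [Matrix.one_apply, Matrix.mul_apply, pow_succ', apply_ite, coeff_one]

theorem derivative_det_one_sub_X_smul {R : Type*} [CommRing R] (A : Matrix ι ι R) :
    d⁄dX R (1 - (X : R⟦X⟧) • A.map C).det =
      (1 - (X : R⟦X⟧) • A.map C).det * mk fun k => -(A ^ (k + 1)).trace := by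
  set M := 1 - (X : R⟦X⟧) • A.map C with hM
  set G : Matrix ι ι R⟦X⟧ := Matrix.of fun i j => mk fun k => (A ^ k) i j with hG
  have hadj : M.adjugate = M.det • G := by
    rw [← mul_one M.adjugate, ← one_sub_X_smul_mul_mk_pow A, ← mul_assoc, Matrix.adjugate_mul,
      smul_mul_assoc, one_mul]
  have hderiv : M.map (d⁄dX R) = -A.map C := by
    ext i j : 2
    by_cases hij : i = j <;> simp [hM, hij, derivative_X]
  rw [derivation_det, hadj, hderiv, smul_mul_assoc, Matrix.trace_smul, smul_eq_mul]
  congr 1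
  ext k
  simp [hG, Matrix.trace, Matrix.mul_apply, pow_succ]

variable {K : Type*} [Field K] [CharZero K]

theorem det_one_sub_X_smul_eq_exp_subst (A : Matrix ι ι K) :
    (1 - (X : K⟦X⟧) • A.map C).det =
      (exp K).subst (mk fun k => -((A ^ k).trace / k)) := by
  refine eq_exp_subst_of_derivative_eq (by simp) ?_ ?_
  · have hone : (constantCoeff (R := K)).mapMatrix (1 - (X : K⟦X⟧) • A.map C) = 1 := by
      ext i j
      obtain rfl | hij := eq_or_ne i j <;> simp [*]
    rw [RingHom.map_det, hone, Matrix.det_one]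
  · rw [derivative_det_one_sub_X_smul]
    congr 1
    ext k
    rw [coeff_mk, coeff_derivative, coeff_mk, Nat.cast_succ, neg_mul,
      div_mul_cancel₀ _ (Nat.cast_add_one_ne_zero k)]

end Determinant

section SummableCoefficients

variable {R : Type*} [NormedRing R] {F G : R⟦X⟧}

theorem summable_norm_coeff_mul (hF : Summable fun k => ‖coeff k F‖)
    (hG : Summable fun k => ‖coeff k G‖) : Summable fun k => ‖coeff k (F * G)‖ := by
  simpa only [coeff_mul] using summable_norm_sum_mul_antidiagonal_of_summable_norm hF hG

theorem tsum_coeff_mul [CompleteSpace R] (hF : Summable fun k => ‖coeff k F‖)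
    (hG : Summable fun k => ‖coeff k G‖) :
    ∑' k, coeff k (F * G) = (∑' k, coeff k F) * ∑' k, coeff k G := by
  simpa only [coeff_mul] using
    (tsum_mul_tsum_eq_tsum_sum_antidiagonal_of_summable_norm hF hG).symm

theorem tsum_norm_coeff_mul_le (hF : Summable fun k => ‖coeff k F‖)
    (hG : Summable fun k => ‖coeff k G‖) :
    ∑' k, ‖coeff k (F * G)‖ ≤ (∑' k, ‖coeff k F‖) * ∑' k, ‖coeff k G‖ := by
  rw [tsum_mul_tsum_eq_tsum_sum_antidiagonal_of_summable_norm hF.norm hG.norm]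
  refine (summable_norm_coeff_mul hF hG).tsum_le_tsum (fun k => ?_)
    (summable_norm_sum_mul_antidiagonal_of_summable_norm hF.norm hG.norm).of_norm
  rw [coeff_mul]
  exact norm_sum_le_of_le _ fun _ _ => norm_mul_le _ _

theorem summable_norm_coeff_one : Summable fun k => ‖coeff k (1 : R⟦X⟧)‖ :=
  summable_of_ne_finset_zero (s := {0}) fun k hk => by
    rw [coeff_one, if_neg (Finset.mem_singleton.not.1 hk), norm_zero]

theorem summable_norm_coeff_pow (hF : Summable fun k => ‖coeff k F‖) (d : ℕ) :
    Summable fun k => ‖coeff k (F ^ d)‖ := by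
  induction d with
  | zero => simpa only [pow_zero] using summable_norm_coeff_one
  | succ d ih => simpa only [pow_succ] using summable_norm_coeff_mul ih hF

theorem tsum_coeff_pow [CompleteSpace R] (hF : Summable fun k => ‖coeff k F‖) (d : ℕ) :
    ∑' k, coeff k (F ^ d) = (∑' k, coeff k F) ^ d := by
  induction d with
  | zero => simp [coeff_one]
  | succ d ih => rw [pow_succ, tsum_coeff_mul (summable_norm_coeff_pow hF d) hF, ih, pow_succ]

theorem tsum_norm_coeff_pow_le [NormOneClass R] (hF : Summable fun k => ‖coeff k F‖) (d : ℕ) :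
    ∑' k, ‖coeff k (F ^ d)‖ ≤ (∑' k, ‖coeff k F‖) ^ d := by
  induction d with
  | zero => simp [coeff_one, apply_ite]
  | succ d ih =>
    rw [pow_succ, pow_succ]
    exact (tsum_norm_coeff_mul_le (summable_norm_coeff_pow hF d) hF).trans
      (mul_le_mul_of_nonneg_right ih (tsum_nonneg fun _ => norm_nonneg _))

variable {𝕜 : Type*} [RCLike 𝕜] {F : 𝕜⟦X⟧}

theorem summable_coeff_pow_div_factorial (hF : Summable fun k => ‖coeff k F‖) :
    Summable fun p : ℕ × ℕ => (p.1.factorial : 𝕜)⁻¹ * coeff p.2 (F ^ p.1) := by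
  refine Summable.of_norm ((summable_prod_of_nonneg fun _ => norm_nonneg _).2 ⟨fun d => ?_, ?_⟩)
  · simpa only [norm_mul] using (summable_norm_coeff_pow hF d).mul_left _
  · refine (Real.summable_pow_div_factorial (∑' k, ‖coeff k F‖)).of_nonneg_of_le
      (fun d => tsum_nonneg fun _ => norm_nonneg _) fun d => ?_
    simp only [norm_mul, norm_inv, RCLike.norm_natCast, tsum_mul_left]
    rw [div_eq_inv_mul]
    exact mul_le_mul_of_nonneg_left (tsum_norm_coeff_pow_le hF d) (by positivity)

theorem hasSum_coeff_exp_subst (hF₀ : constantCoeff F = 0) (hF : Summable fun k => ‖coeff k F‖) :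
    HasSum (fun N => coeff N ((exp 𝕜).subst F)) (NormedSpace.exp (∑' k, coeff k F)) := by
  have hsubst := HasSubst.of_constantCoeff_zero' hF₀
  have htotal := (summable_coeff_pow_div_factorial hF).hasSum
  have hrow (d : ℕ) : HasSum (fun k => (d.factorial : 𝕜)⁻¹ * coeff k (F ^ d))
      ((d.factorial : 𝕜)⁻¹ * (∑' k, coeff k F) ^ d) := by
    rw [← tsum_coeff_pow hF d]
    exact (summable_norm_coeff_pow hF d).of_norm.hasSum.mul_left _
  have hcolumn (N : ℕ) : HasSum (fun d : ℕ => (d.factorial : 𝕜)⁻¹ * coeff N (F ^ d))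
      (coeff N ((exp 𝕜).subst F)) := by
    have hfin := coeff_subst_finite' hsubst (exp 𝕜) N
    have hsum := (summable_of_hasFiniteSupport hfin (L := .unconditional ℕ)).hasSum
    rw [tsum_eq_finsum hfin, ← coeff_subst' hsubst] at hsum
    simpa using hsum
  rw [(htotal.prod_fiberwise hrow).unique (NormedSpace.exp_series_hasSum_exp' (𝕂 := 𝕜) _)] at htotal
  exact ((Equiv.prodComm ℕ ℕ).hasSum_iff.2 htotal).prod_fiberwise hcolumn

end SummableCoefficients

section SumOverDegree

variable {ι : Type*} [Fintype ι] [DecidableEq ι]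

theorem fiber_sum_eq_piAntidiag (N : ℕ) :
    (fun r : ι → ℕ => ∑ i, r i) ⁻¹' {N} = (Finset.univ.piAntidiag N : Finset (ι → ℕ)) := by
  ext r
  simp

theorem tsum_fiber_sum_eq_sum_piAntidiag {E : Type*} [AddCommMonoid E] [TopologicalSpace E]
    (f : (ι → ℕ) → E) (N : ℕ) :
    ∑' r : (fun r : ι → ℕ => ∑ i, r i) ⁻¹' {N}, f r = ∑ r ∈ Finset.univ.piAntidiag N, f r := by
  rw [fiber_sum_eq_piAntidiag]
  exact Finset.tsum_subtype' _ _

theorem summable_of_summable_sum_piAntidiag {f : (ι → ℕ) → ℝ} (hf : 0 ≤ f)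
    (hsum : Summable fun N => ∑ r ∈ Finset.univ.piAntidiag N, f r) : Summable f := by
  refine (summable_partition hf (s := fun N => (fun r : ι → ℕ => ∑ i, r i) ⁻¹' {N})
    fun r => existsUnique_eq').2 ⟨fun N => ?_, ?_⟩
  · rw [fiber_sum_eq_piAntidiag]
    exact (Finset.univ.piAntidiag N).summable f
  · simpa only [tsum_fiber_sum_eq_sum_piAntidiag] using hsum

theorem hasSum_of_hasSum_sum_piAntidiag {E : Type*} [NormedAddCommGroup E] [CompleteSpace E]
    {f : (ι → ℕ) → E} {g : (ι → ℕ) → ℝ} {a : E} (hfg : ∀ r, ‖f r‖ ≤ g r)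
    (hg : Summable fun N => ∑ r ∈ Finset.univ.piAntidiag N, g r)
    (hf : HasSum (fun N => ∑ r ∈ Finset.univ.piAntidiag N, f r) a) : HasSum f a := by
  have hsum : Summable f := .of_norm_bounded
    (summable_of_summable_sum_piAntidiag (fun r => (norm_nonneg _).trans (hfg r)) hg) hfg
  have hdegree := hsum.hasSum.tsum_fiberwise fun r => ∑ i, r i
  simp only [tsum_fiber_sum_eq_sum_piAntidiag] at hdegree
  exact hdegree.unique hf ▸ hsum.hasSum

end SumOverDegree

section LinftyOpNorm

open scoped Matrix.Norms.Operator

variable {R m n : Type*} [SeminormedAddCommGroup R] [Fintype m] [Fintype n]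

theorem norm_apply_le_linftyOpNorm (A : Matrix m n R) (i : m) (j : n) : ‖A i j‖ ≤ ‖A‖ := by
  rw [← coe_nnnorm, ← coe_nnnorm, NNReal.coe_le_coe, Matrix.linfty_opNNNorm_def]
  exact (Finset.single_le_sum (f := fun j => ‖A i j‖₊) (fun _ _ => zero_le)
    (Finset.mem_univ j)).trans (Finset.le_sup (f := fun i => ∑ j, ‖A i j‖₊) (Finset.mem_univ i))

theorem norm_trace_le_card_mul_linftyOpNorm (A : Matrix n n R) :
    ‖A.trace‖ ≤ Fintype.card n * ‖A‖ := by
  rw [← nsmul_eq_mul, ← Finset.card_univ, ← Finset.sum_const]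
  exact norm_sum_le_of_le _ fun i _ => norm_apply_le_linftyOpNorm A i i

theorem linftyOpNorm_map_norm (A : Matrix m n R) : ‖A.map (‖·‖)‖ = ‖A‖ := by
  simp [Matrix.linfty_opNorm_def]

theorem linftyOpNorm_lt_one {A : Matrix m n R}
    (hA : ∀ i j, ‖A i j‖ < 1 / (Fintype.card n + 1)) : ‖A‖ < 1 := by
  have hrow : ∀ i, ∑ j, ‖A i j‖ < 1 := fun i => calc
    ∑ j, ‖A i j‖ ≤ Fintype.card n * (1 / (Fintype.card n + 1)) := by
      rw [← nsmul_eq_mul, ← Finset.card_univ, ← Finset.sum_const]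
      exact Finset.sum_le_sum fun j _ => by rw [Finset.card_univ]; exact (hA i j).le
    _ < 1 := by rw [mul_one_div, div_lt_one (by positivity)]; exact lt_add_one _
  rw [Matrix.linfty_opNorm_def, ← NNReal.coe_one, NNReal.coe_lt_coe, Finset.sup_lt_iff one_pos]
  exact fun i _ => by simpa [← NNReal.coe_lt_coe] using hrow i

end LinftyOpNorm

section SmallMatrices

open scoped Matrix.Norms.Operator

variable {𝕜 : Type*} [RCLike 𝕜] {ι : Type*} [Fintype ι] [DecidableEq ι]

theorem summable_norm_trace_pow_div {A : Matrix ι ι 𝕜} (hA : ‖A‖ < 1) :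
    Summable fun k : ℕ => ‖(A ^ k).trace / k‖ := by
  refine ((summable_geometric_of_lt_one (norm_nonneg A) hA).mul_left
    (Fintype.card ι : ℝ)).of_nonneg_of_le (fun _ => norm_nonneg _) fun k => ?_
  rcases k.eq_zero_or_pos with rfl | hk
  · simp
  · calc ‖(A ^ k).trace / k‖ ≤ ‖(A ^ k).trace‖ := by
          rw [norm_div, RCLike.norm_natCast]
          exact div_le_self (norm_nonneg _) (Nat.one_le_cast.2 hk)
      _ ≤ Fintype.card ι * ‖A ^ k‖ := norm_trace_le_card_mul_linftyOpNorm _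
      _ ≤ Fintype.card ι * ‖A‖ ^ k := by gcongr; exact norm_pow_le' A hk

/-- The branch of `log (det (1 - A))` given by `-∑ tr (A ^ k) / k` over `k ≥ 1`, for `A` of norm
less than `1`. The term `k = 0` vanishes because of the convention `x / 0 = 0`. -/
def logDetOneSub (A : Matrix ι ι 𝕜) : 𝕜 :=
  -∑' k : ℕ, (A ^ k).trace / k

theorem hasSum_coeff_det_one_sub_X_smul {R : Type*} [CommRing R] [TopologicalSpace R]
    (A : Matrix ι ι R) :
    HasSum (fun N => coeff N (1 - (X : R⟦X⟧) • A.map C).det) (1 - A).det := by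
  have hcoe : (1 - (X : R⟦X⟧) • A.map C).det = (A.charpolyRev : R⟦X⟧) := by
    rw [Matrix.charpolyRev, ← Polynomial.coeToPowerSeries.ringHom_apply, RingHom.map_det]
    congr 1
    ext i j : 2
    obtain rfl | hij := eq_or_ne i j <;> simp [*, mul_comm (coeff _ (X : R⟦X⟧))]
  have heval : (1 - A).det = A.charpolyRev.eval 1 := by
    rw [Matrix.charpolyRev, ← Polynomial.coe_evalRingHom, RingHom.map_det]
    congr 1
    ext i j : 2
    obtain rfl | hij := eq_or_ne i j <;> simp [*]
  rw [hcoe, heval, Polynomial.eval_eq_sum, Polynomial.sum]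
  simp only [Polynomial.coeff_coe, one_pow, mul_one]
  exact hasSum_sum_of_ne_finset_zero fun N => Polynomial.notMem_support_iff.1

theorem exp_logDetOneSub {A : Matrix ι ι 𝕜} (hA : ‖A‖ < 1) :
    NormedSpace.exp (logDetOneSub A) = (1 - A).det := by
  have hsum := hasSum_coeff_exp_subst (F := mk fun k => -((A ^ k).trace / k)) (by simp)
    (by simpa using summable_norm_trace_pow_div hA)
  rw [← det_one_sub_X_smul_eq_exp_subst] at hsum
  simpa [logDetOneSub, tsum_neg] using hsum.unique (hasSum_coeff_det_one_sub_X_smul A)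

theorem exp_mul_logDetOneSub (β : ℝ) {A : Matrix ι ι ℝ} (hA : ‖A‖ < 1) :
    Real.exp (β * logDetOneSub A) = (1 - A).det ^ β := by
  rw [← exp_logDetOneSub hA, ← Real.exp_eq_exp_ℝ, mul_comm, Real.exp_mul]

theorem coeff_derangementLog_trace (β : 𝕜) (A : Matrix ι ι 𝕜) (k : ℕ) :
    coeff k (derangementLog fun k => β * (A ^ k).trace) =
      β * ((A ^ k).trace / k) - if k = 1 then β * A.trace else 0 := by
  rcases k with _ | _ | k <;> simp [derangementLog, mul_div_assoc]

theorem summable_norm_coeff_derangementLog (β : 𝕜) {A : Matrix ι ι 𝕜} (hA : ‖A‖ < 1) :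
    Summable fun k => ‖coeff k (derangementLog fun k => β * (A ^ k).trace)‖ := by
  simp only [coeff_derangementLog_trace]
  exact (((summable_norm_trace_pow_div hA).of_norm.mul_left β).sub
    (hasSum_ite_eq 1 (β * A.trace)).summable).norm

theorem tsum_coeff_derangementLog (β : 𝕜) {A : Matrix ι ι 𝕜} (hA : ‖A‖ < 1) :
    ∑' k, coeff k (derangementLog fun k => β * (A ^ k).trace) =
      -β * A.trace - β * logDetOneSub A := by
  simp only [coeff_derangementLog_trace]
  have := (((summable_norm_trace_pow_div hA).of_norm.hasSum.mul_left β).sub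
    (hasSum_ite_eq 1 (β * A.trace))).tsum_eq
  rw [this, logDetOneSub]
  ring

theorem hasSum_sum_piAntidiag_dpermB_repA {n : ℕ} (β : 𝕜) {A : Matrix (Fin n) (Fin n) 𝕜}
    (hA : ‖A‖ < 1) :
    HasSum (fun N => ∑ r ∈ Finset.univ.piAntidiag N,
        ((∏ i, (r i).factorial : ℕ) : 𝕜)⁻¹ * dpermB β (repA A r))
      (NormedSpace.exp (-β * A.trace) / NormedSpace.exp (β * logDetOneSub A)) := by
  have hcoeff := coeff_exp_subst_derangementLog fun k => β * (A ^ k).trace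
  simp only [sum_piAntidiag_dpermB_repA, ← hcoeff]
  rw [div_eq_mul_inv, ← NormedSpace.exp_neg, ← NormedSpace.exp_add, ← sub_eq_add_neg,
    ← tsum_coeff_derangementLog β hA]
  exact hasSum_coeff_exp_subst (constantCoeff_derangementLog _)
    (summable_norm_coeff_derangementLog β hA)

theorem norm_dpermB_le {R α : Type*} [NormedField R] [Fintype α] [DecidableEq α] (β : R)
    (M : Matrix α α R) :
    ‖dpermB β M‖ ≤ dpermB ‖β‖ (M.map (‖·‖)) := by
  refine (norm_sum_le _ _).trans_eq (Finset.sum_congr rfl fun π _ => ?_)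
  rw [norm_mul, norm_pow, norm_prod]
  rfl

theorem derangement_MMT_general {n : ℕ} (β : 𝕜) {A : Matrix (Fin n) (Fin n) 𝕜} (hA : ‖A‖ < 1) :
    HasSum (fun r : Fin n → ℕ => ((∏ i, (r i).factorial : ℕ) : 𝕜)⁻¹ * dpermB β (repA A r))
      (NormedSpace.exp (-β * A.trace) / NormedSpace.exp (β * logDetOneSub A)) := by
  have hA' : ‖A.map (‖·‖)‖ < 1 := (linftyOpNorm_map_norm A).trans_lt hA
  have hmajorant := (hasSum_sum_piAntidiag_dpermB_repA ‖β‖ hA').summable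
  refine hasSum_of_hasSum_sum_piAntidiag (fun r => ?_) hmajorant
    (hasSum_sum_piAntidiag_dpermB_repA β hA)
  rw [norm_mul, norm_inv, RCLike.norm_natCast]
  exact mul_le_mul_of_nonneg_left (norm_dpermB_le β (repA A r)) (by positivity)

end SmallMatrices

/-- The Derangement MacMahon Master Theorem:
`Σ_r (1/r!) dperm_β A(n^r,n^r) = e^{-β Tr A} / det(I-A)^β` for small `A`. -/
theorem derangement_MMT (n : ℕ) (β : ℝ) :
    ∃ ε > (0 : ℝ), ∀ A : Matrix (Fin n) (Fin n) ℝ, (∀ i j, |A i j| < ε) →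
      ∑' r : Fin n → ℕ, ((∏ i, (r i).factorial : ℕ) : ℝ)⁻¹ * dpermB β (repA A r)
        = Real.exp (-β * Matrix.trace A) / Matrix.det (1 - A) ^ β := by
  refine ⟨1 / (n + 1), by positivity, fun A hA => ?_⟩
  have hnorm := linftyOpNorm_lt_one (A := A) (by simpa using hA)
  rw [(derangement_MMT_general β hnorm).tsum_eq, ← Real.exp_eq_exp_ℝ,
    exp_mul_logDetOneSub β hnorm]
end
end

section
/- (Submatrix Derangement MMT) With block matrix [[B,U],[V,A]] (B n'×n', A n×n): Σ_r (1/r!) dperm_β [[B, U(n^r)],[V(n^r), A(n^r,n^r)]] = e^{-β Tr A} · perm_β(B̂) / det(I-A)^β, where B̂ = B − diag B + U(I-A)^{-1}V and (diag B)_{i'j'} = B_{i'i'} δ_{i'j'}. -/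
open scoped Classical

noncomputable section

/-- The β-extended permanent of a matrix. -/
def permB {α : Type*} [Fintype α] [DecidableEq α] {R : Type*} [CommRing R]
    (β : R) (M : Matrix α α R) : R :=
  ∑ π : Equiv.Perm α, β ^ cycleCount π * ∏ i, M i (π i)

/-- `U(n^r)`: columns of `U` repeated according to `r`. -/
def repU {n' n : ℕ} {R : Type*} (U : Matrix (Fin n') (Fin n) R) (r : Fin n → ℕ) :
    Matrix (Fin n') ((i : Fin n) × Fin (r i)) R :=
  fun i' k => U i' k.1

/-- `V(n^r)`: rows of `V` repeated according to `r`. -/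
def repV {n' n : ℕ} {R : Type*} (V : Matrix (Fin n) (Fin n') R) (r : Fin n → ℕ) :
    Matrix ((i : Fin n) × Fin (r i)) (Fin n') R :=
  fun k j' => V k.1 j'

/- Repeating the index `g` exactly `m` times gives the `m`-th Taylor coefficient at `t = 0` of
`e^{β d t} (1 - t M_gg)^{-β} perm_β (M (1 - t E_gg M)⁻¹ + diag)`: the flow
`M(t) = M (1 - t E_gg M)⁻¹` solves the Riccati equation `M' = M E_gg M`, and differentiating
`perm_β` along it adds one more copy of `g`, by the expansion of `perm_β` along a new index. At
`t = 1` this sums out `g`. The remaining indices are summed out one after another, since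
`M ↦ M (1 - P M)⁻¹` is an action of the additive feedback `P`; replacing all entries by their
absolute values gives absolute convergence. Derangements are the case where the diagonal shift is
`-diag M`, which produces `e^{-β tr A}`. -/

section CycleCount

open Equiv Equiv.Perm

variable {α γ : Type*} [Fintype α] [DecidableEq α] [Fintype γ] [DecidableEq γ]

theorem cycleCount_add_card_support (π : Perm α) :
    cycleCount π + π.support.card = Fintype.card α + π.cycleType.card := by
  have h := Finset.card_filter_add_card_filter_not (s := Finset.univ) fun x => π x = x
  rw [Finset.card_univ] at h
  simp only [cycleCount, support, ne_eq]
  omega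

theorem cycleCount_extendDomain {p : γ → Prop} [DecidablePred p] (e : α ≃ Subtype p)
    (π : Perm α) :
    cycleCount (π.extendDomain e) + Fintype.card α = cycleCount π + Fintype.card γ := by
  have hα := cycleCount_add_card_support π
  have hγ := cycleCount_add_card_support (π.extendDomain e)
  rw [cycleType_extendDomain, card_support_extend_domain] at hγ
  omega

theorem cycleCount_permCongr (e : α ≃ γ) (π : Perm α) :
    cycleCount (e.permCongr π) = cycleCount π := by
  have h := cycleCount_extendDomain (e.trans (Equiv.Set.univ γ).symm) π
  rw [Fintype.card_congr e, Nat.add_right_cancel_iff] at h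
  exact h

theorem optionCongr_eq_extendDomain {ι : Type*} (π : Perm ι) :
    optionCongr π = π.extendDomain (optionIsSomeEquiv ι).symm := by
  ext1 x
  rcases x with _ | x
  · rw [extendDomain_apply_not_subtype _ _ (by simp), optionCongr_apply, Option.map_none]
  · rw [extendDomain_apply_subtype _ _ (by simp)]
    simp [optionIsSomeEquiv]

theorem cycleCount_optionCongr (π : Perm α) :
    cycleCount (optionCongr π) = cycleCount π + 1 := by
  have h := cycleCount_extendDomain (optionIsSomeEquiv α).symm π
  rw [← optionCongr_eq_extendDomain, Fintype.card_option] at h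
  omega

theorem cycleCount_mul_of_disjoint {π σ : Perm α} (h : π.Disjoint σ) :
    cycleCount (π * σ) + Fintype.card α = cycleCount π + cycleCount σ := by
  have hπ := cycleCount_add_card_support π
  have hσ := cycleCount_add_card_support σ
  have hmul := cycleCount_add_card_support (π * σ)
  rw [h.cycleType_mul, h.card_support_mul, Multiset.card_add] at hmul
  omega

theorem cycleCount_formPerm_cons {x : α} {l : List α} (h : (x :: l).Nodup) :
    cycleCount (x :: l).formPerm + l.length = Fintype.card α := by
  have hcount := cycleCount_add_card_support (x :: l).formPerm
  rcases l with _ | ⟨y, l⟩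
  · simpa using hcount
  · rw [(List.isCycle_formPerm h (by simp)).cycleType,
      List.support_formPerm_of_nodup _ h (by simp), List.toFinset_card_of_nodup h] at hcount
    simp only [List.length_cons, Multiset.card_singleton] at hcount ⊢
    omega

theorem exists_eq_formPerm_cons_mul {ι : Type*} [Finite ι] [DecidableEq ι] (π : Perm ι) (y : ι) :
    ∃ (l : List ι) (σ : Perm ι), (y :: l).Nodup ∧ (∀ z ∈ y :: l, σ z = z) ∧
      π = (y :: l).formPerm * σ := by
  cases nonempty_fintype ι
  by_cases hy : π y = y
  · exact ⟨[], π, by simp, by simpa using hy, by simp⟩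
  have hmem : y ∈ π.support := mem_support.2 hy
  have hcycle := cycleOf_mem_cycleFactorsFinset_iff.2 hmem
  have hdisj := disjoint_mul_inv_of_mem_cycleFactorsFinset hcycle
  obtain ⟨l, hl⟩ : ∃ l, π.toList y = y :: l := by
    rw [← List.head?_eq_some_iff, List.head?_eq_getElem?,
      List.getElem?_eq_getElem (length_toList_pos_of_mem_support π y hmem),
      toList_getElem_zero π y hmem]
  refine ⟨l, π * (π.cycleOf y)⁻¹, hl ▸ nodup_toList π y, fun z hz => ?_, ?_⟩
  · rw [← hl, mem_toList_iff] at hz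
    refine (hdisj z).resolve_right ?_
    rw [hz.1.cycleOf_apply]
    exact fun h => hy ((hz.1.apply_eq_self_iff).2 h)
  · rw [← hl, formPerm_toList, ← hdisj.commute.eq, inv_mul_cancel_right]

theorem disjoint_formPerm_of_forall_mem {ι : Type*} [DecidableEq ι] {l : List ι} {σ : Perm ι}
    (h : ∀ z ∈ l, σ z = z) :
    l.formPerm.Disjoint σ := by
  intro z
  by_cases hz : z ∈ l
  · exact Or.inr (h z hz)
  · exact Or.inl (List.formPerm_apply_of_notMem hz)

theorem cycleCount_swap_mul {π : Perm α} {x y : α} (hx : π x = x) (hxy : x ≠ y) :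
    cycleCount (swap x y * π) + 1 = cycleCount π := by
  obtain ⟨l, σ, hnodup, hfix, rfl⟩ := exists_eq_formPerm_cons_mul π y
  have hxl : x ∉ y :: l := by
    intro hmem
    rw [mul_apply, hfix x hmem, List.formPerm_apply_mem_eq_self_iff _ hnodup x hmem] at hx
    rcases l with _ | ⟨z, l⟩
    · exact hxy (List.mem_singleton.1 hmem)
    · simp at hx
  have hσx : σ x = x :=
    (y :: l).formPerm.injective (hx.trans (List.formPerm_apply_of_notMem hxl).symm)
  have hfix' : ∀ z ∈ x :: y :: l, σ z = z := List.forall_mem_cons.2 ⟨hσx, hfix⟩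
  have hshort := cycleCount_mul_of_disjoint (disjoint_formPerm_of_forall_mem hfix)
  have hlong := cycleCount_mul_of_disjoint (disjoint_formPerm_of_forall_mem hfix')
  have hshort' := cycleCount_formPerm_cons hnodup
  have hlong' := cycleCount_formPerm_cons (List.nodup_cons.2 ⟨hxl, hnodup⟩)
  rw [← mul_assoc, ← List.formPerm_cons_cons]
  rw [List.length_cons] at hlong'
  omega

end CycleCount

section Permanent

open Equiv Matrix

variable {α γ R : Type*} [Fintype α] [DecidableEq α] [Fintype γ] [DecidableEq γ] [CommRing R]

theorem permB_submatrix_equiv (β : R) (e : α ≃ γ) (M : Matrix γ γ R) :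
    permB β (M.submatrix e e) = permB β M := by
  refine Fintype.sum_equiv e.permCongr _ _ fun π => ?_
  rw [cycleCount_permCongr]
  congr 1
  exact Fintype.prod_equiv e _ _ fun i => by simp

theorem map_permB {S : Type*} [CommRing S] (φ : R →+* S) (β : R) (M : Matrix α α R) :
    φ (permB β M) = permB (φ β) (M.map φ) := by
  simp only [permB, map_sum, map_mul, map_prod, map_pow, map_apply]

theorem abs_permB_le [LinearOrder R] [IsStrictOrderedRing R] {β : R} {M N : Matrix α α R}
    (h : ∀ i j, |M i j| ≤ N i j) : |permB β M| ≤ permB |β| N := by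
  refine (Finset.abs_sum_le_sum_abs _ _).trans (Finset.sum_le_sum fun π _ => ?_)
  rw [abs_mul, abs_pow, Finset.abs_prod]
  gcongr with i
  exact h i (π i)

theorem dpermB_eq_permB_sub_diagonal (β : R) (M : Matrix α α R) :
    dpermB β M = permB β (M - diagonal fun i => M i i) := by
  rw [dpermB, permB, Finset.sum_filter]
  refine Finset.sum_congr rfl fun π _ => ?_
  split_ifs with hπ
  · congr 1
    refine Finset.prod_congr rfl fun i _ => ?_
    rw [Matrix.sub_apply, diagonal_apply_ne' _ (hπ i), sub_zero]
  · push Not at hπ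
    obtain ⟨x, hx⟩ := hπ
    rw [Finset.prod_eq_zero (Finset.mem_univ x) (by simp [hx]), mul_zero]

theorem prod_updateRow_apply (M : Matrix α α R) (i : α) (w : α → R) (π : Perm α) :
    ∏ j, M.updateRow i w j (π j) = w (π i) * ∏ j ∈ Finset.univ.erase i, M j (π j) := by
  rw [← Finset.mul_prod_erase _ _ (Finset.mem_univ i), updateRow_self]
  congr 1
  exact Finset.prod_congr rfl fun j hj => by rw [updateRow_ne (Finset.ne_of_mem_erase hj)]

theorem prod_swap_none_mul_optionCongr (M : Matrix (Option α) (Option α) R) (π : Perm α)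
    (i : α) :
    ∏ j, M j ((swap none (some (π i)) * optionCongr π) j) =
      ∏ j, ((M.submatrix some some).updateRow i
        fun k => M (some i) none * M none (some k)) j (π j) := by
  rw [prod_updateRow_apply, Fintype.prod_option,
    ← Finset.mul_prod_erase _ _ (Finset.mem_univ i), ← mul_assoc]
  congr 1
  · simp [mul_comm]
  · refine Finset.prod_congr rfl fun j hj => ?_
    have hj' : π j ≠ π i := π.injective.ne (Finset.ne_of_mem_erase hj)
    simp [swap_apply_of_ne_of_ne, hj']

/- The cycle through `none` is either the fixed point `none`, or it passes `some i → none → some k`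
and contracting that passage to `some i → some k` keeps the number of cycles. -/
theorem permB_option (β : R) (M : Matrix (Option α) (Option α) R) :
    permB β M = β * M none none * permB β (M.submatrix some some) +
      ∑ i, permB β ((M.submatrix some some).updateRow i
        fun k => M (some i) none * M none (some k)) := by
  have hfixed (π : Perm α) : β ^ cycleCount (optionCongr π) * ∏ j, M j (optionCongr π j) =
      β * M none none * (β ^ cycleCount π * ∏ j, M.submatrix some some j (π j)) := by
    rw [cycleCount_optionCongr, Fintype.prod_option]
    simp only [optionCongr_apply, Option.map_none, Option.map_some, submatrix_apply]
    ring
  have hcycleCount (π : Perm α) (i : α) :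
      cycleCount (swap none (some (π i)) * optionCongr π) = cycleCount π := by
    have h := cycleCount_swap_mul (π := optionCongr π) (x := none) (y := some (π i))
      (by simp) (by simp)
    rwa [cycleCount_optionCongr, Nat.add_right_cancel_iff] at h
  calc permB β M
      = ∑ π : Perm α, (β ^ cycleCount (optionCongr π) * ∏ j, M j (optionCongr π j) +
          ∑ i, β ^ cycleCount (swap none (some (π i)) * optionCongr π) *
            ∏ j, M j ((swap none (some (π i)) * optionCongr π) j)) := by
        rw [permB, ← Perm.decomposeOption.symm.sum_comp, Fintype.sum_prod_type_right]
        refine Finset.sum_congr rfl fun π _ => ?_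
        rw [Fintype.sum_option, ← Equiv.sum_comp π]
        simp only [Perm.decomposeOption_symm_apply, swap_self, ← Perm.one_def, one_mul]
    _ = _ := by
        simp only [hfixed, hcycleCount, prod_swap_none_mul_optionCongr, Finset.sum_add_distrib]
        rw [← Finset.mul_sum, Finset.sum_comm]
        rfl

theorem hasDerivAt_permB {𝕜 : Type*} [NontriviallyNormedField 𝕜] {M : 𝕜 → Matrix α α 𝕜}
    {M' : Matrix α α 𝕜} {t : 𝕜} (β : 𝕜)
    (hM : ∀ i j, HasDerivAt (fun s => M s i j) (M' i j) t) :
    HasDerivAt (fun s => permB β (M s)) (∑ i, permB β ((M t).updateRow i (M' i))) t := by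
  have hterm (π : Perm α) : HasDerivAt (fun s => β ^ cycleCount π * ∏ i, M s i (π i))
      (∑ i, β ^ cycleCount π * ∏ j, (M t).updateRow i (M' i) j (π j)) t := by
    rw [← Finset.mul_sum]
    convert! (HasDerivAt.fun_finsetProd fun i _ => hM i (π i)).const_mul _ using 2
    refine Finset.sum_congr rfl fun i _ => ?_
    rw [prod_updateRow_apply, smul_eq_mul, mul_comm]
  simp only [permB]
  rw [Finset.sum_comm]
  exact HasDerivAt.fun_sum fun π _ => hterm π

end Permanent

section Inflate

open Matrix

variable {γ δ R : Type*} [DecidableEq δ]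

/-- The matrix `M` with its indices repeated along `f : δ → γ`, plus the diagonal shift by `d`.
The shift affects only the diagonal entries, not those between distinct copies of an index; for
`d g = -M g g` the diagonal vanishes, which turns `permB` into `dpermB`. -/
def inflate [AddZeroClass R] (M : Matrix γ γ R) (d : γ → R) (f : δ → γ) : Matrix δ δ R :=
  M.submatrix f f + diagonal fun a => d (f a)

theorem inflate_comp_equiv [AddZeroClass R] {ε : Type*} [DecidableEq ε] (M : Matrix γ γ R)
    (d : γ → R) (f : δ → γ) (e : ε ≃ δ) :
    inflate M d (f ∘ e) = (inflate M d f).submatrix e e := by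
  rw [inflate, inflate, submatrix_add, Pi.add_apply, Pi.add_apply, submatrix_diagonal_equiv]
  rfl

theorem permB_inflate_comp_equiv [CommRing R] [Fintype δ] {ε : Type*} [Fintype ε] [DecidableEq ε]
    (β : R) (M : Matrix γ γ R) (d : γ → R) (f : δ → γ) (e : ε ≃ δ) :
    permB β (inflate M d (f ∘ e)) = permB β (inflate M d f) := by
  rw [inflate_comp_equiv, permB_submatrix_equiv]

theorem map_inflate {S : Type*} [CommRing R] [CommRing S] (φ : R →+* S) (M : Matrix γ γ R)
    (d : γ → R) (f : δ → γ) :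
    (inflate M d f).map φ = inflate (M.map φ) (φ ∘ d) f := by
  ext i j
  simp [inflate, diagonal_apply, apply_ite φ]

theorem abs_permB_inflate_le [Fintype δ] [CommRing R] [LinearOrder R] [IsStrictOrderedRing R]
    (β : R) (M : Matrix γ γ R) (d : γ → R) (f : δ → γ) :
    |permB β (inflate M d f)| ≤ permB |β| (inflate (M.map abs) (fun g => |d g|) f) := by
  refine abs_permB_le fun i j => (abs_add_le _ _).trans ?_
  simp only [inflate, Matrix.add_apply, submatrix_apply, map_apply, diagonal_apply,
    apply_ite abs, abs_zero, le_refl]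

theorem permB_inflate_option [Fintype δ] [CommRing R] (β : R) (M : Matrix γ γ R) (d : γ → R)
    (f : δ → γ) (g : γ) :
    permB β (inflate M d fun o : Option δ => o.elim g f) =
      β * (d g + M g g) * permB β (inflate M d f) +
        ∑ i, permB β ((inflate M d f).updateRow i fun k => M (f i) g * M g (f k)) := by
  have hsome : (inflate M d fun o : Option δ => o.elim g f).submatrix some some =
      inflate M d f := by
    ext i j
    simp [inflate, diagonal_apply]
  rw [permB_option, hsome]
  simp [inflate, add_comm (d g)]

end Inflate

section Flow

variable {γ δ 𝕜 : Type*} [Fintype δ] [DecidableEq δ] [NontriviallyNormedField 𝕜]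

theorem hasDerivAt_mul_permB_inflate {β : 𝕜} {M : 𝕜 → Matrix γ γ 𝕜} {d : γ → 𝕜} {θ : 𝕜 → 𝕜}
    {g : γ} {t : 𝕜} (hM : ∀ i j, HasDerivAt (fun s => M s i j) (M t i g * M t g j) t)
    (hθ : HasDerivAt θ (β * (d g + M t g g) * θ t) t) (f : δ → γ) :
    HasDerivAt (fun s => θ s * permB β (inflate (M s) d f))
      (θ t * permB β (inflate (M t) d fun o : Option δ => o.elim g f)) t := by
  have hperm : HasDerivAt (fun s => permB β (inflate (M s) d f))
      (∑ i, permB β ((inflate (M t) d f).updateRow i fun k => M t (f i) g * M t g (f k))) t :=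
    hasDerivAt_permB β fun i j => (hM (f i) (f j)).add_const _
  convert! hθ.mul hperm using 1
  rw [permB_inflate_option]
  ring

theorem iteratedDeriv_mul_permB_inflate {β : 𝕜} {M : 𝕜 → Matrix γ γ 𝕜} {d : γ → 𝕜} {θ : 𝕜 → 𝕜}
    {g : γ} {s : Set 𝕜} (hs : IsOpen s)
    (hM : ∀ t ∈ s, ∀ i j, HasDerivAt (fun u => M u i j) (M t i g * M t g j) t)
    (hθ : ∀ t ∈ s, HasDerivAt θ (β * (d g + M t g g) * θ t) t) (f : δ → γ) (m : ℕ) :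
    ∀ t ∈ s, iteratedDeriv m (fun u => θ u * permB β (inflate (M u) d f)) t =
      θ t * permB β (inflate (M t) d (Sum.elim f fun _ : Fin m => g)) := by
  induction m with
  | zero =>
    intro t _
    rw [iteratedDeriv_zero, ← permB_inflate_comp_equiv _ _ _ f (Equiv.sumEmpty δ (Fin 0))]
    congr 3
    ext (a | a)
    · rfl
    · exact a.elim0
  | succ m ih =>
    intro t ht
    have hlocal : iteratedDeriv m (fun u => θ u * permB β (inflate (M u) d f)) =ᶠ[nhds t]
        fun u => θ u * permB β (inflate (M u) d (Sum.elim f fun _ : Fin m => g)) :=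
      Filter.eventually_of_mem (hs.mem_nhds ht) ih
    let e : δ ⊕ Fin (m + 1) ≃ Option (δ ⊕ Fin m) :=
      ((Equiv.refl δ).sumCongr (finSuccEquiv m)).trans <|
        ((Equiv.refl δ).sumCongr (Equiv.optionEquivSumPUnit.{0} (Fin m))).trans <|
          (Equiv.sumAssoc δ (Fin m) PUnit).symm.trans (Equiv.optionEquivSumPUnit _).symm
    rw [iteratedDeriv_succ, hlocal.deriv_eq,
      (hasDerivAt_mul_permB_inflate (hM t ht) (hθ t ht) _).deriv,
      ← permB_inflate_comp_equiv _ _ _ _ e]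
    congr 3
    ext (a | a)
    · rfl
    · refine Fin.cases rfl (fun _ => rfl) a

end Flow

section LoopMask

open Matrix

variable {γ K : Type*} [DecidableEq γ] [CommRing K]

/-- The feedback matrix closing the loop once at each index `p i`. -/
def loopMask {n : ℕ} (p : Fin n → γ) : Matrix γ γ K :=
  ∑ i, single (p i) (p i) 1

theorem loopMask_zero (p : Fin 0 → γ) : (loopMask p : Matrix γ γ K) = 0 :=
  Fin.sum_univ_zero _

theorem loopMask_succ {n : ℕ} (p : Fin (n + 1) → γ) :
    (loopMask p : Matrix γ γ K) = single (p 0) (p 0) 1 + loopMask fun i => p i.succ :=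
  Fin.sum_univ_succ _

theorem loopMask_inr {α : Type*} [DecidableEq α] {n : ℕ} :
    (loopMask (Sum.inr : Fin n → α ⊕ Fin n) : Matrix _ _ K) = fromBlocks 0 0 0 1 := by
  ext (i | i) (j | j) <;>
    simp [loopMask, Matrix.sum_apply, single_apply, one_apply, ite_and]

end LoopMask

section ClosedLoop

open Matrix

variable {γ K : Type*} [Fintype γ] [DecidableEq γ]

/-- The closed-loop response `M + M P M + M P M P M + ⋯` of the matrix `M` under the feedback `P`.
It is junk unless `1 - P * M` is invertible. -/
def closedLoop [CommRing K] (P M : Matrix γ γ K) : Matrix γ γ K :=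
  M * (1 - P * M)⁻¹

theorem closedLoop_zero [CommRing K] (M : Matrix γ γ K) : closedLoop 0 M = M := by
  simp [closedLoop]

theorem one_sub_add_mul_eq_mul [CommRing K] {P : Matrix γ γ K} (P' : Matrix γ γ K)
    {M : Matrix γ γ K} (h : IsUnit (1 - P * M).det) :
    1 - (P + P') * M = (1 - P' * closedLoop P M) * (1 - P * M) := by
  rw [closedLoop, sub_mul, one_mul, ← mul_assoc, nonsing_inv_mul_cancel_right _ _ h]
  noncomm_ring

theorem det_one_sub_add_mul [CommRing K] {P : Matrix γ γ K} (P' : Matrix γ γ K)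
    {M : Matrix γ γ K} (h : IsUnit (1 - P * M).det) :
    (1 - (P + P') * M).det = (1 - P * M).det * (1 - P' * closedLoop P M).det := by
  rw [one_sub_add_mul_eq_mul P' h, det_mul, mul_comm]

theorem closedLoop_add [CommRing K] {P : Matrix γ γ K} (P' : Matrix γ γ K)
    {M : Matrix γ γ K} (h : IsUnit (1 - P * M).det) :
    closedLoop (P + P') M = closedLoop P' (closedLoop P M) := by
  rw [closedLoop, one_sub_add_mul_eq_mul P' h, Matrix.mul_inv_rev, ← mul_assoc]
  rfl

theorem det_one_sub_single_mul [CommRing K] (g : γ) (t : K) (M : Matrix γ γ K) :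
    (1 - single g g t * M).det = 1 - t * M g g := by
  have hrank : single g g t * M =
      replicateCol Unit (Pi.single g t) * replicateRow Unit (M g) := by
    ext i j
    by_cases hi : i = g <;> simp [hi, mul_apply, single_apply, Ne.symm]
  rw [hrank, det_one_sub_mul_comm, det_unique]
  simp [mul_apply, Pi.single_apply, mul_comm]

theorem closedLoop_single_apply [Field K] {g : γ} {t : K} {M : Matrix γ γ K}
    (h : 1 - t * M g g ≠ 0) (i j : γ) :
    closedLoop (single g g t) M i j = M i j + t / (1 - t * M g g) * (M i g * M g j) := by
  set c := t / (1 - t * M g g) with hc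
  have hinv : (1 - single g g t * M)⁻¹ = 1 + single g g c * M := by
    refine inv_eq_right_inv ?_
    have hcorner : single g g t * M * (single g g c * M) =
        single g g (t * M g g * c) * M := by
      rw [← mul_assoc, single_mul_mul_single]
    have hcoeff : c = t + t * M g g * c := by
      rw [hc]
      field_simp
      ring
    have hsplit : single g g c * M = single g g t * M + single g g (t * M g g * c) * M := by
      rw [← add_mul, ← single_add, ← hcoeff]
    rw [sub_mul, one_mul, mul_add, mul_one, hcorner, ← hsplit, add_sub_cancel_right]
  rw [closedLoop, hinv, mul_add, mul_one, Matrix.add_apply]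
  congr 1
  rw [← mul_assoc, mul_apply, Finset.sum_eq_single g]
  · simp
    ring
  · intro k _ hk
    simp [hk]
  · simp

theorem closedLoop_single_apply_self [Field K] {g : γ} {t : K} {M : Matrix γ γ K}
    (h : 1 - t * M g g ≠ 0) :
    closedLoop (single g g t) M g g = M g g / (1 - t * M g g) := by
  rw [closedLoop_single_apply h, eq_div_iff h, add_mul, mul_right_comm, div_mul_cancel₀ _ h]
  ring

theorem hasDerivAt_closedLoop_single [NontriviallyNormedField K] {g : γ} {t : K}
    {M : Matrix γ γ K} (h : 1 - t * M g g ≠ 0) (i j : γ) :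
    HasDerivAt (fun s => closedLoop (single g g s) M i j)
      (closedLoop (single g g t) M i g * closedLoop (single g g t) M g j) t := by
  have hnear : ∀ᶠ s in nhds t, 1 - s * M g g ≠ 0 :=
    (show Continuous fun s => 1 - s * M g g by fun_prop).continuousAt.eventually_ne h
  have hden : HasDerivAt (fun s => 1 - s * M g g) (-M g g) t := by
    simpa using ((hasDerivAt_id t).mul_const (M g g)).const_sub 1
  have hfrac := (((hasDerivAt_id t).div hden h).mul_const (M i g * M g j)).const_add (M i j)
  refine HasDerivAt.congr_of_eventuallyEq ?_
    (hnear.mono fun s hs => closedLoop_single_apply hs i j)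
  convert! hfrac using 1
  rw [closedLoop_single_apply h, closedLoop_single_apply h, id]
  field_simp
  ring

variable {α ι : Type*} [Fintype α] [DecidableEq α] [Fintype ι] [DecidableEq ι]

theorem one_sub_fromBlocks_one_mul [CommRing K] (B : Matrix α α K) (U : Matrix α ι K)
    (V : Matrix ι α K) (A : Matrix ι ι K) :
    1 - fromBlocks 0 0 0 1 * fromBlocks B U V A = fromBlocks 1 0 (-V) (1 - A) := by
  rw [fromBlocks_multiply, ← fromBlocks_one, sub_eq_add_neg, fromBlocks_neg, fromBlocks_add]
  simp [sub_eq_add_neg]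

theorem det_one_sub_fromBlocks_one_mul [CommRing K] (B : Matrix α α K) (U : Matrix α ι K)
    (V : Matrix ι α K) (A : Matrix ι ι K) :
    (1 - fromBlocks 0 0 0 1 * fromBlocks B U V A).det = (1 - A).det := by
  rw [one_sub_fromBlocks_one_mul, det_fromBlocks_zero₁₂, det_one, one_mul]

theorem closedLoop_fromBlocks_one_apply_inl_inl [CommRing K] (B : Matrix α α K)
    (U : Matrix α ι K) (V : Matrix ι α K) {A : Matrix ι ι K} (h : IsUnit (1 - A).det) (i j : α) :
    closedLoop (fromBlocks 0 0 0 1) (fromBlocks B U V A) (Sum.inl i) (Sum.inl j) =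
      (B + U * (1 - A)⁻¹ * V) i j := by
  have hunit : IsUnit (1 : Matrix α α K) ↔ IsUnit (1 - A) :=
    iff_of_true isUnit_one ((isUnit_iff_isUnit_det _).2 h)
  rw [closedLoop, one_sub_fromBlocks_one_mul, inv_fromBlocks_zero₁₂_of_isUnit_iff _ _ _ hunit,
    fromBlocks_multiply, fromBlocks_apply₁₁]
  simp [Matrix.mul_assoc]

end ClosedLoop

section RepeatedIndex

open Matrix
open scoped Nat

variable {γ δ : Type*} [Fintype γ] [DecidableEq γ] [Fintype δ] [DecidableEq δ]

theorem hasDerivAt_exp_mul_one_sub_cpow {β c a t : ℂ} (h : 1 - t * a ∈ Complex.slitPlane) :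
    HasDerivAt (fun s => Complex.exp (β * c * s) * (1 - s * a) ^ (-β))
      (β * (c + a / (1 - t * a)) * (Complex.exp (β * c * t) * (1 - t * a) ^ (-β))) t := by
  have hne : 1 - t * a ≠ 0 := Complex.slitPlane_ne_zero h
  have hexp : HasDerivAt (fun s => Complex.exp (β * c * s))
      (Complex.exp (β * c * t) * (β * c)) t := by
    simpa using ((hasDerivAt_id t).const_mul (β * c)).cexp
  have hbase : HasDerivAt (fun s => 1 - s * a) (-a) t := by
    simpa using ((hasDerivAt_id t).mul_const a).const_sub 1
  convert! hexp.mul (hbase.cpow_const h) using 1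
  rw [Complex.cpow_sub _ _ hne, Complex.cpow_one]
  field_simp

theorem one_sub_mul_mem_slitPlane {a t : ℂ} (ha : ‖a‖ < 1) (ht : ‖t‖ < 2 / (1 + ‖a‖)) :
    1 - t * a ∈ Complex.slitPlane := by
  rw [lt_div_iff₀ (by positivity)] at ht
  rw [sub_eq_add_neg]
  refine Complex.mem_slitPlane_of_norm_lt_one ?_
  rw [norm_neg, norm_mul]
  nlinarith [norm_nonneg t, norm_nonneg a]

theorem hasSum_permB_inflate_complex (β : ℂ) {M : Matrix γ γ ℂ} (d : γ → ℂ) (f : δ → γ) {g : γ}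
    (h : ‖M g g‖ < 1) :
    HasSum (fun m : ℕ => (m ! : ℂ)⁻¹ * permB β (inflate M d (Sum.elim f fun _ : Fin m => g)))
      (Complex.exp (β * d g) * (1 - M g g) ^ (-β) *
        permB β (inflate (closedLoop (single g g 1) M) d f)) := by
  set R : ℝ := 2 / (1 + ‖M g g‖) with hR
  have hR₁ : 1 < R := by
    rw [hR, one_lt_div (by positivity)]
    linarith
  have hslit : ∀ t ∈ Metric.ball (0 : ℂ) R, 1 - t * M g g ∈ Complex.slitPlane :=
    fun t ht => one_sub_mul_mem_slitPlane h (mem_ball_zero_iff.1 ht)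
  have hne : ∀ t ∈ Metric.ball (0 : ℂ) R, 1 - t * M g g ≠ 0 :=
    fun t ht => Complex.slitPlane_ne_zero (hslit t ht)
  set θ : ℂ → ℂ := fun t => Complex.exp (β * d g * t) * (1 - t * M g g) ^ (-β)
  have hM : ∀ t ∈ Metric.ball (0 : ℂ) R, ∀ i j,
      HasDerivAt (fun s => closedLoop (single g g s) M i j)
        (closedLoop (single g g t) M i g * closedLoop (single g g t) M g j) t :=
    fun t ht => hasDerivAt_closedLoop_single (hne t ht)
  have hθ : ∀ t ∈ Metric.ball (0 : ℂ) R,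
      HasDerivAt θ (β * (d g + closedLoop (single g g t) M g g) * θ t) t := by
    intro t ht
    rw [closedLoop_single_apply_self (hne t ht)]
    exact hasDerivAt_exp_mul_one_sub_cpow (hslit t ht)
  have hdiff : DifferentiableOn ℂ
      (fun t => θ t * permB β (inflate (closedLoop (single g g t) M) d f)) (Metric.ball 0 R) :=
    fun t ht => (hasDerivAt_mul_permB_inflate (hM t ht) (hθ t ht)
      f).differentiableAt.differentiableWithinAt
  have hone : (1 : ℂ) ∈ Metric.ball (0 : ℂ) R := by simpa using hR₁
  have htaylor := Complex.hasSum_taylorSeries_on_ball hdiff hone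
  have hzero : (0 : ℂ) ∈ Metric.ball (0 : ℂ) R := Metric.mem_ball_self (by linarith)
  simpa [iteratedDeriv_mul_permB_inflate Metric.isOpen_ball hM hθ f _ 0 hzero, θ,
    closedLoop_zero] using htaylor

theorem hasSum_permB_inflate (β : ℝ) {M : Matrix γ γ ℝ} (d : γ → ℝ) (f : δ → γ) {g : γ}
    (h : |M g g| < 1) :
    HasSum (fun m : ℕ => (m ! : ℝ)⁻¹ * permB β (inflate M d (Sum.elim f fun _ : Fin m => g)))
      (Real.exp (β * d g) * (1 - M g g) ^ (-β) *
        permB β (inflate (closedLoop (single g g 1) M) d f)) := by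
  have hpos : 0 < 1 - M g g := sub_pos.2 (abs_lt.1 h).2
  have hloop : (closedLoop (single g g 1) M).map Complex.ofRealHom =
      closedLoop (single g g 1) (M.map Complex.ofRealHom) := by
    ext i j
    rw [map_apply, closedLoop_single_apply (by simpa using hpos.ne'),
      closedLoop_single_apply (by simpa using Complex.ofReal_ne_zero.2 hpos.ne')]
    simp
  rw [← Complex.hasSum_ofReal]
  convert! hasSum_permB_inflate_complex (β : ℂ) (M := M.map Complex.ofRealHom)
    (Complex.ofRealHom ∘ d) f (g := g) (by simpa using h) using 2
  · rw [Complex.ofReal_mul, ← Complex.ofRealHom_eq_coe (permB _ _), map_permB, map_inflate]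
    simp
  · rw [Complex.ofReal_mul, ← Complex.ofRealHom_eq_coe (permB _ _), map_permB, map_inflate, hloop]
    simp [Complex.ofReal_cpow hpos.le]

end RepeatedIndex

section RowContraction

open Matrix

variable {γ : Type*} {n : ℕ}

theorem abs_apply_zero_lt_one {M : Matrix γ γ ℝ} {p : Fin (n + 1) → γ}
    (h : ∀ i, ∑ j, |M (p i) (p j)| < 1) : |M (p 0) (p 0)| < 1 :=
  (Finset.single_le_sum (f := fun j => |M (p 0) (p j)|) (fun _ _ => abs_nonneg _)
    (Finset.mem_univ 0)).trans_lt (h 0)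

variable [Fintype γ] [DecidableEq γ]

theorem sum_abs_closedLoop_single_lt_one {M : Matrix γ γ ℝ} {p : Fin (n + 1) → γ}
    (h : ∀ i, ∑ j, |M (p i) (p j)| < 1) (i : Fin n) :
    ∑ j : Fin n, |closedLoop (single (p 0) (p 0) 1) M (p i.succ) (p j.succ)| < 1 := by
  set a := M (p 0) (p 0)
  set b := M (p i.succ) (p 0)
  have ha : 0 < 1 - |a| := sub_pos.2 (abs_apply_zero_lt_one h)
  have hle : 1 - |a| ≤ |1 - a| := by linarith [le_abs_self (1 - a), le_abs_self a]
  have hne : 1 - a ≠ 0 := abs_pos.1 (ha.trans_le hle)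
  have hrow₀ : ∑ j : Fin n, |M (p 0) (p j.succ)| ≤ 1 - |a| := by
    have := h 0
    rw [Fin.sum_univ_succ] at this
    linarith
  have hrow : |b| + ∑ j : Fin n, |M (p i.succ) (p j.succ)| < 1 := by
    simpa only [Fin.sum_univ_succ] using h i.succ
  calc ∑ j : Fin n, |closedLoop (single (p 0) (p 0) 1) M (p i.succ) (p j.succ)|
      ≤ ∑ j : Fin n, (|M (p i.succ) (p j.succ)| + |b| / (1 - |a|) * |M (p 0) (p j.succ)|) := by
        refine Finset.sum_le_sum fun j _ => ?_
        rw [closedLoop_single_apply (by rwa [one_mul]), one_mul]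
        refine (abs_add_le _ _).trans ?_
        rw [abs_mul, abs_mul, abs_div, abs_one, ← mul_assoc, one_div_mul_eq_div]
        gcongr
    _ = ∑ j : Fin n, |M (p i.succ) (p j.succ)| +
          |b| / (1 - |a|) * ∑ j : Fin n, |M (p 0) (p j.succ)| := by
        rw [Finset.sum_add_distrib, Finset.mul_sum]
    _ ≤ ∑ j : Fin n, |M (p i.succ) (p j.succ)| + |b| / (1 - |a|) * (1 - |a|) := by gcongr
    _ < 1 := by
        rw [div_mul_cancel₀ _ ha.ne']
        linarith

theorem closedLoop_single_apply_nonneg {M : Matrix γ γ ℝ} {g : γ} (hM : ∀ i j, 0 ≤ M i j)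
    (h : |M g g| < 1) (i j : γ) : 0 ≤ closedLoop (single g g 1) M i j := by
  have hpos : 0 < 1 - 1 * M g g := by linarith [le_abs_self (M g g)]
  rw [closedLoop_single_apply hpos.ne']
  have := mul_nonneg (hM i g) (hM g j)
  exact add_nonneg (hM i j) (by positivity)

theorem det_one_sub_single_mul_pos {M : Matrix γ γ ℝ} {g : γ} (h : |M g g| < 1) :
    0 < (1 - single g g 1 * M).det := by
  rw [det_one_sub_single_mul]
  linarith [le_abs_self (M g g)]

theorem det_one_sub_loopMask_mul_pos {M : Matrix γ γ ℝ} {p : Fin n → γ}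
    (h : ∀ i, ∑ j, |M (p i) (p j)| < 1) : 0 < (1 - loopMask p * M).det := by
  induction n generalizing M with
  | zero => simp [loopMask_zero]
  | succ n ih =>
    have hpos := det_one_sub_single_mul_pos (abs_apply_zero_lt_one h)
    rw [loopMask_succ, det_one_sub_add_mul _ hpos.ne'.isUnit]
    exact mul_pos hpos (ih (sum_abs_closedLoop_single_lt_one h))

end RowContraction

section RepeatedIndices

open Matrix

/-- Splits off the first summand of a sigma type over `Fin (n + 1)`. -/
def sigmaFinSuccEquiv {n : ℕ} (X : Fin (n + 1) → Type*) :
    (Σ i, X i) ≃ (Σ i : Fin n, X i.succ) ⊕ X 0 where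
  toFun x := Fin.cases (motive := fun i => X i → (Σ i : Fin n, X i.succ) ⊕ X 0)
    Sum.inr (fun i y => Sum.inl ⟨i, y⟩) x.1 x.2
  invFun := Sum.elim (fun x => ⟨x.1.succ, x.2⟩) fun y => ⟨0, y⟩
  left_inv := by
    rintro ⟨i, y⟩
    induction i using Fin.cases <;> rfl
  right_inv := by
    rintro (x | y) <;> rfl

variable {γ δ : Type*} [Fintype δ] [DecidableEq δ] {n : ℕ}

/-- The coefficient of the multi-index `r` in the expansion along the indices `p i`, the `i`-th of
which is repeated `r i` times on top of the index family `f`. -/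
def repTerm (β : ℝ) (M : Matrix γ γ ℝ) (d : γ → ℝ) (f : δ → γ) (p : Fin n → γ) (r : Fin n → ℕ) :
    ℝ :=
  ((∏ i, (r i).factorial : ℕ) : ℝ)⁻¹ *
    permB β (inflate M d (Sum.elim f fun k : Σ i, Fin (r i) => p k.1))

theorem repTerm_fin_zero (β : ℝ) (M : Matrix γ γ ℝ) (d : γ → ℝ) (f : δ → γ) (p : Fin 0 → γ)
    (r : Fin 0 → ℕ) : repTerm β M d f p r = permB β (inflate M d f) := by
  rw [repTerm, ← permB_inflate_comp_equiv _ _ _ _ (Equiv.sumEmpty δ (Σ i, Fin (r i))).symm]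
  simp [Function.comp_def]

theorem repTerm_cons (β : ℝ) (M : Matrix γ γ ℝ) (d : γ → ℝ) (f : δ → γ) (p : Fin (n + 1) → γ)
    (m : ℕ) (r : Fin n → ℕ) :
    repTerm β M d f p (Fin.cons m r : Fin (n + 1) → ℕ) =
      ((∏ i, (r i).factorial : ℕ) : ℝ)⁻¹ * ((m.factorial : ℝ)⁻¹ * permB β (inflate M d
        (Sum.elim (Sum.elim f fun k : Σ i, Fin (r i) => p k.1.succ) fun _ : Fin m => p 0))) := by
  let c : Fin (n + 1) → ℕ := Fin.cons m r
  let e : δ ⊕ (Σ i, Fin (c i)) ≃ (δ ⊕ Σ i, Fin (r i)) ⊕ Fin m :=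
    ((Equiv.refl δ).sumCongr (sigmaFinSuccEquiv fun i => Fin (c i))).trans
      (Equiv.sumAssoc δ (Σ i, Fin (r i)) (Fin m)).symm
  rw [repTerm, ← permB_inflate_comp_equiv _ _ _ _ e, Fin.prod_univ_succ, Fin.cons_zero]
  simp only [Fin.cons_succ]
  rw [Nat.cast_mul, mul_inv, mul_comm (m.factorial : ℝ)⁻¹, mul_assoc]
  congr 5
  ext (x | ⟨i, y⟩)
  · rfl
  · induction i using Fin.cases <;> rfl

theorem abs_repTerm_le (β : ℝ) (M : Matrix γ γ ℝ) (d : γ → ℝ) (f : δ → γ) (p : Fin n → γ)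
    (r : Fin n → ℕ) :
    |repTerm β M d f p r| ≤ repTerm |β| (M.map abs) (fun g => |d g|) f p r := by
  rw [repTerm, abs_mul, abs_of_nonneg (by positivity)]
  exact mul_le_mul_of_nonneg_left (abs_permB_inflate_le _ _ _ _) (by positivity)

theorem hasSum_repTerm_cons [Fintype γ] [DecidableEq γ] (β : ℝ) {M : Matrix γ γ ℝ}
    (d : γ → ℝ) (f : δ → γ) {p : Fin (n + 1) → γ} (h : |M (p 0) (p 0)| < 1) (r : Fin n → ℕ) :
    HasSum (fun m => repTerm β M d f p (Fin.cons m r : Fin (n + 1) → ℕ))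
      (Real.exp (β * d (p 0)) * (1 - M (p 0) (p 0)) ^ (-β) *
        repTerm β (closedLoop (single (p 0) (p 0) 1) M) d f (fun i => p i.succ) r) := by
  simp only [repTerm_cons]
  rw [repTerm, mul_left_comm]
  exact (hasSum_permB_inflate β d _ h).mul_left _

/-- `Fin.consEquiv` with the first entry as the second factor, so that summing over it comes
first. -/
def tailHeadEquiv (n : ℕ) : (Fin n → ℕ) × ℕ ≃ (Fin (n + 1) → ℕ) :=
  (Equiv.prodComm _ _).trans (Fin.consEquiv fun _ => ℕ)

theorem summable_repTerm_of_nonneg [Finite γ] {β : ℝ} {M : Matrix γ γ ℝ} {d : γ → ℝ}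
    (f : δ → γ) {p : Fin n → γ} (hβ : 0 ≤ β) (hM : ∀ i j, 0 ≤ M i j) (hd : ∀ g, 0 ≤ d g)
    (h : ∀ i, ∑ j, |M (p i) (p j)| < 1) : Summable (repTerm β M d f p) := by
  cases nonempty_fintype γ
  induction n generalizing M with
  | zero => exact (hasSum_unique _).summable
  | succ n ih =>
    have h₀ := abs_apply_zero_lt_one h
    have hfiber := hasSum_repTerm_cons β d f h₀
    have hnonneg : 0 ≤ repTerm β M d f p := by
      intro r
      refine (abs_nonneg _).trans ((abs_repTerm_le β M d f p r).trans_eq ?_)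
      congr 1
      · exact abs_of_nonneg hβ
      · ext i j
        exact abs_of_nonneg (hM i j)
      · ext g
        exact abs_of_nonneg (hd g)
    refine (tailHeadEquiv n).summable_iff.1 ?_
    refine (summable_prod_of_nonneg fun _ => hnonneg _).2 ⟨fun r => (hfiber r).summable, ?_⟩
    convert! (ih (closedLoop_single_apply_nonneg hM h₀)
      (sum_abs_closedLoop_single_lt_one h)).mul_left
        (Real.exp (β * d (p 0)) * (1 - M (p 0) (p 0)) ^ (-β)) using 2 with r
    exact (hfiber r).tsum_eq

theorem summable_repTerm [Finite γ] (β : ℝ) {M : Matrix γ γ ℝ} (d : γ → ℝ) (f : δ → γ)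
    {p : Fin n → γ} (h : ∀ i, ∑ j, |M (p i) (p j)| < 1) : Summable (repTerm β M d f p) := by
  refine Summable.of_norm_bounded ?_ (abs_repTerm_le β M d f p)
  exact summable_repTerm_of_nonneg f (abs_nonneg β) (fun i j => abs_nonneg (M i j))
    (fun g => abs_nonneg (d g)) (by simpa using h)

theorem hasSum_repTerm [Fintype γ] [DecidableEq γ] (β : ℝ) {M : Matrix γ γ ℝ} (d : γ → ℝ)
    (f : δ → γ) {p : Fin n → γ} (h : ∀ i, ∑ j, |M (p i) (p j)| < 1) :
    HasSum (repTerm β M d f p)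
      (Real.exp (β * ∑ i, d (p i)) * (1 - loopMask p * M).det ^ (-β) *
        permB β (inflate (closedLoop (loopMask p) M) d f)) := by
  induction n generalizing M with
  | zero =>
    convert! hasSum_unique (repTerm β M d f p) using 1
    simp [loopMask_zero, closedLoop_zero, repTerm_fin_zero]
  | succ n ih =>
    have h₀ := abs_apply_zero_lt_one h
    have htail := sum_abs_closedLoop_single_lt_one h
    have hdet := det_one_sub_single_mul_pos h₀
    have hfiber := hasSum_repTerm_cons β d f h₀
    have htotal := (tailHeadEquiv n).hasSum_iff.2 (summable_repTerm β d f h).hasSum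
    have hiterated := (ih htail).mul_left (Real.exp (β * d (p 0)) * (1 - M (p 0) (p 0)) ^ (-β))
    convert! (summable_repTerm β d f h).hasSum using 1
    rw [(htotal.prod_fiberwise hfiber).unique hiterated, loopMask_succ,
      det_one_sub_add_mul _ hdet.ne'.isUnit, closedLoop_add _ hdet.ne'.isUnit,
      Real.mul_rpow hdet.le (det_one_sub_loopMask_mul_pos htail).le, det_one_sub_single_mul,
      one_mul, Fin.sum_univ_succ, mul_add, Real.exp_add]
    ring

end RepeatedIndices

section Neumann

open Matrix

attribute [local instance] Matrix.linftyOpNormedRing Matrix.linftyOpNormedAlgebra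

theorem tsum_pow_eq_one_sub_inv {ι : Type*} [Fintype ι] [DecidableEq ι] {A : Matrix ι ι ℝ}
    (hA : ∀ i, ∑ j, |A i j| < 1) : ∑' k : ℕ, A ^ k = (1 - A)⁻¹ := by
  have hnorm : ‖A‖ < 1 := by
    rw [linfty_opNorm_def, ← NNReal.coe_one, NNReal.coe_lt_coe, Finset.sup_lt_iff (by simp)]
    intro i _
    rw [← NNReal.coe_lt_coe]
    simpa using hA i
  exact (inv_eq_left_inv (summable_geometric_of_norm_lt_one hnorm).tsum_pow_mul_one_sub).symm

end Neumann

section Submatrix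

open Matrix

theorem dpermB_submatrix {γ δ R : Type*} [Fintype δ] [DecidableEq δ] [CommRing R] (β : R)
    (M : Matrix γ γ R) (f : δ → γ) :
    dpermB β (M.submatrix f f) = permB β (inflate M (fun g => -M g g) f) := by
  rw [dpermB_eq_permB_sub_diagonal, sub_eq_add_neg, diagonal_neg]
  rfl

theorem fromBlocks_repU_repV_repA {n' n : ℕ} {R : Type*} (B : Matrix (Fin n') (Fin n') R)
    (U : Matrix (Fin n') (Fin n) R) (V : Matrix (Fin n) (Fin n') R)
    (A : Matrix (Fin n) (Fin n) R) (r : Fin n → ℕ) :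
    fromBlocks B (repU U r) (repV V r) (repA A r) =
      (fromBlocks B U V A).submatrix (Sum.map id Sigma.fst) (Sum.map id Sigma.fst) := by
  ext (i | i) (j | j) <;> rfl

theorem submatrix_derangement_MMT_general {α : Type*} [Fintype α] [DecidableEq α] {n : ℕ} (β : ℝ)
    (B : Matrix α α ℝ) (U : Matrix α (Fin n) ℝ) (V : Matrix (Fin n) α ℝ)
    {A : Matrix (Fin n) (Fin n) ℝ} (hA : ∀ i, ∑ j, |A i j| < 1) :
    HasSum (fun r : Fin n → ℕ => ((∏ i, (r i).factorial : ℕ) : ℝ)⁻¹ *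
        dpermB β ((fromBlocks B U V A).submatrix
          (Sum.map id (Sigma.fst : (Σ i, Fin (r i)) → Fin n)) (Sum.map id Sigma.fst)))
      (Real.exp (-β * trace A) * permB β (B - diagonal (fun i => B i i) + U * (1 - A)⁻¹ * V)
        / (1 - A).det ^ β) := by
  set M := fromBlocks B U V A with hM
  set d : α ⊕ Fin n → ℝ := fun g => -M g g with hd
  have hsum := hasSum_repTerm β (M := M) d Sum.inl (p := Sum.inr) hA
  have hdet : (1 - loopMask Sum.inr * M).det = (1 - A).det := by
    rw [loopMask_inr, det_one_sub_fromBlocks_one_mul]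
  have hpos : 0 < (1 - A).det := hdet ▸ det_one_sub_loopMask_mul_pos (M := M) (p := Sum.inr) hA
  have hloop : inflate (closedLoop (loopMask Sum.inr) M) d Sum.inl =
      B - diagonal (fun i => B i i) + U * (1 - A)⁻¹ * V := by
    ext i j
    rw [inflate, Matrix.add_apply, submatrix_apply, loopMask_inr,
      closedLoop_fromBlocks_one_apply_inl_inl _ _ _ hpos.ne'.isUnit]
    rw [Matrix.add_apply, Matrix.add_apply, Matrix.sub_apply]
    by_cases hij : i = j <;> simp [hd, hM, hij, sub_eq_add_neg, add_right_comm]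
  have hexp : β * ∑ i, d (Sum.inr i) = -β * trace A := by
    simp [hd, hM, trace]
  rw [hdet, hloop, hexp, Real.rpow_neg hpos.le, mul_right_comm, ← div_eq_mul_inv] at hsum
  simpa only [dpermB_submatrix] using! hsum

end Submatrix

/-- The Submatrix Derangement MacMahon Master Theorem, for small `A`, with
`B̂ = B - diag B + U(I-A)⁻¹V` and `(I-A)⁻¹ = Σ_{k≥0} A^k`. -/
theorem submatrix_derangement_MMT (n' n : ℕ) (β : ℝ) :
    ∃ ε > (0 : ℝ), ∀ (B : Matrix (Fin n') (Fin n') ℝ) (U : Matrix (Fin n') (Fin n) ℝ)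
      (V : Matrix (Fin n) (Fin n') ℝ) (A : Matrix (Fin n) (Fin n) ℝ),
      (∀ i j, |A i j| < ε) →
      ∑' r : Fin n → ℕ, ((∏ i, (r i).factorial : ℕ) : ℝ)⁻¹ *
          dpermB β (Matrix.fromBlocks B (repU U r) (repV V r) (repA A r))
        = Real.exp (-β * Matrix.trace A) *
            permB β (B - Matrix.diagonal (fun i' => B i' i') + U * (∑' k : ℕ, A ^ k) * V)
            / Matrix.det (1 - A) ^ β := by
  refine ⟨1 / (n + 1), by positivity, fun B U V A hA => ?_⟩
  have hrow : ∀ i, ∑ j, |A i j| < 1 := fun i =>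
    calc ∑ j, |A i j| ≤ ∑ _j : Fin n, (1 / (n + 1) : ℝ) :=
          Finset.sum_le_sum fun j _ => (hA i j).le
      _ = n / (n + 1) := by simp [div_eq_mul_inv]
      _ < 1 := by
        rw [div_lt_one (by positivity)]
        exact lt_add_one _
  simp only [fromBlocks_repU_repV_repA, tsum_pow_eq_one_sub_inv hrow]
  exact (submatrix_derangement_MMT_general β B U V hrow).tsum_eq
end
end
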